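/- Let N ≥ 9. Then the extremal solution u* of (P)_λ on the unit ball satisfies u*(x) ≤ 1 − |x|^{4/3} for all x ∈ B. -/

import Mathlib

open MeasureTheory Metric Set Filter

/-- The Laplacian of `u : ℝ^N → ℝ`, as the sum of pure second partial derivatives. -/
noncomputable def lap {N : ℕ} (u : EuclideanSpace ℝ (Fin N) → ℝ) (x : EuclideanSpace ℝ (Fin N)) : ℝ :=
  ∑ i : Fin N, fderiv ℝ (fun y => fderiv ℝ u y (EuclideanSpace.single i 1)) x
    (EuclideanSpace.single i 1)

/-- The biharmonic operator `Δ²`. -/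
noncomputable def biharm {N : ℕ} (u : EuclideanSpace ℝ (Fin N) → ℝ)
    (x : EuclideanSpace ℝ (Fin N)) : ℝ :=
  lap (lap u) x

/-- A classical solution of `(P)_λ` on the unit ball `B ⊆ ℝ^N`:
`u ∈ C⁴(B̄)`, `0 < u < 1` in `B`, `Δ²u = λ (1-u)⁻²` in `B`, and `u = 0`, `∂_ν u = 0` on `∂B`. -/
structure IsClassicalSolution (N : ℕ) (lam : ℝ) (u : EuclideanSpace ℝ (Fin N) → ℝ) : Prop where
  contDiffOn : ContDiffOn ℝ 4 u (closedBall (0 : EuclideanSpace ℝ (Fin N)) 1)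
  pos : ∀ x ∈ ball (0 : EuclideanSpace ℝ (Fin N)) 1, 0 < u x
  lt_one : ∀ x ∈ ball (0 : EuclideanSpace ℝ (Fin N)) 1, u x < 1
  eqn : ∀ x ∈ ball (0 : EuclideanSpace ℝ (Fin N)) 1, biharm u x = lam / (1 - u x) ^ 2
  bdry : ∀ x : EuclideanSpace ℝ (Fin N), ‖x‖ = 1 → u x = 0
  bdry_deriv : ∀ x : EuclideanSpace ℝ (Fin N), ‖x‖ = 1 →
    fderivWithin ℝ u (closedBall (0 : EuclideanSpace ℝ (Fin N)) 1) x x = 0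

/-- The set of voltages `λ > 0` for which `(P)_λ` admits a classical solution;
the pull-in voltage `λ*` is its supremum. -/
def solSet (N : ℕ) : Set ℝ := {lam | 0 < lam ∧ ∃ u, IsClassicalSolution N lam u}

/-- `λ̄_N = (8/9)(N - 2/3)(N - 8/3)`. -/
noncomputable def lamBar (N : ℕ) : ℝ := (8 / 9) * ((N : ℝ) - 2 / 3) * ((N : ℝ) - 8 / 3)

/-! The minimal solutions `u_λ` are radial, since the reflections of `u_λ` are again solutions, so
it suffices to show `1 - u ≥ r^(2/3)`, with `r = |x|²`, for every radial classical solution `u`;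
letting `λ ↗ λ*` then gives the theorem. If this fails, some multiple `A r^(2/3)` with `0 < A < 1`
touches `1 - u` from below at a first point `b ∈ (0, 1)`. The function `φ = r^(2/3)` solves `Δ²φ =
-λ̄_N φ⁻²` away from the origin. If `A³ λ̄_N ≤ λ`, then `w = 1 - u - A φ` satisfies `Δ²w ≤ 2 λ̄_N
|x|⁻⁴ w` on the ball `r < b`, which the Hardy–Rellich inequality excludes because `2 λ̄_N ≤ H_N` for
`N ≥ 9`. If `λ < A³ λ̄_N`, then `Δ²w > 0`, so `w` is nondecreasing in `r` on `[b, 1]`; but its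
derivative at `r = 1` is `-2A/3 < 0`, by the boundary condition `∂_ν u = 0`.

The pull-in voltage `λ*` is positive because the contraction principle, applied to the explicit
radial solution operator of `Δ²`, gives a solution for small `λ`; it is finite because testing the
equation with a bump function bounds `λ`. -/

local notation:max "𝔼" N:max => EuclideanSpace ℝ (Fin N)

section Laplacian

variable {N : ℕ}

theorem lap_eq_laplacian {u : 𝔼 N → ℝ} {x : 𝔼 N} (hu : ContDiffAt ℝ 2 u x) :
    lap u x = Laplacian.laplacian u x := by
  have hdiff : DifferentiableAt ℝ (fderiv ℝ u) x :=
    (hu.fderiv_right (m := 1) (by norm_num)).differentiableAt (by norm_num)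
  rw [InnerProductSpace.laplacian_eq_iteratedFDeriv_orthonormalBasis u
    (EuclideanSpace.basisFun (Fin N) ℝ)]
  refine Finset.sum_congr rfl fun i _ => ?_
  rw [fderiv_clm_apply hdiff (differentiableAt_const _), iteratedFDeriv_two_apply]
  simp

theorem lap_eventuallyEq {u v : 𝔼 N → ℝ} {x : 𝔼 N} (h : u =ᶠ[nhds x] v) :
    lap u =ᶠ[nhds x] lap v := by
  filter_upwards [h.eventuallyEq_nhds] with y hy
  refine Finset.sum_congr rfl fun i _ => ?_
  have hfderiv : (fun z => fderiv ℝ u z (EuclideanSpace.single i 1)) =ᶠ[nhds y]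
      fun z => fderiv ℝ v z (EuclideanSpace.single i 1) := by
    filter_upwards [hy.eventuallyEq_nhds] with z hz
    rw [hz.fderiv_eq]
  rw [hfderiv.fderiv_eq]

theorem contDiffAt_lap {u : 𝔼 N → ℝ} {x : 𝔼 N} {m n : WithTop ℕ∞} (hu : ContDiffAt ℝ n u x)
    (hmn : m + 1 + 1 ≤ n) : ContDiffAt ℝ m (lap u) x :=
  ContDiffAt.sum fun _ _ => ContDiffAt.clm_apply
    ((ContDiffAt.clm_apply (hu.fderiv_right hmn) contDiffAt_const).fderiv_right le_rfl)
    contDiffAt_const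

theorem lap_comp_linearIsometryEquiv {u : 𝔼 N → ℝ} {x : 𝔼 N} (R : 𝔼 N ≃ₗᵢ[ℝ] 𝔼 N)
    (hu : ContDiffAt ℝ 2 u (R x)) : lap (u ∘ R) x = lap u (R x) := by
  rw [lap_eq_laplacian (hu.comp x R.contDiff.contDiffAt), lap_eq_laplacian hu,
    InnerProductSpace.laplacian_eq_iteratedFDeriv_orthonormalBasis _
      (EuclideanSpace.basisFun (Fin N) ℝ),
    InnerProductSpace.laplacian_eq_iteratedFDeriv_orthonormalBasis _
      ((EuclideanSpace.basisFun (Fin N) ℝ).map R)]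
  refine Finset.sum_congr rfl fun i _ => ?_
  have hcomp := R.toContinuousLinearEquiv.iteratedFDerivWithin_comp_right u
    uniqueDiffOn_univ (mem_univ (R x)) 2
  simp only [preimage_univ, iteratedFDerivWithin_univ,
    LinearIsometryEquiv.coe_toContinuousLinearEquiv] at hcomp
  rw [hcomp, ContinuousMultilinearMap.compContinuousLinearMap_apply]
  congr 1
  ext j
  fin_cases j <;> simp

theorem biharm_comp_linearIsometryEquiv {u : 𝔼 N → ℝ} {x : 𝔼 N} (R : 𝔼 N ≃ₗᵢ[ℝ] 𝔼 N)
    (hu : ContDiffAt ℝ 4 u (R x)) : biharm (u ∘ R) x = biharm u (R x) := by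
  have hlap : lap (u ∘ R) =ᶠ[nhds x] lap u ∘ R := by
    filter_upwards [R.continuous.continuousAt.eventually (hu.eventually (by simp))] with y hy
    exact lap_comp_linearIsometryEquiv R (hy.of_le (by norm_num))
  unfold biharm
  rw [(lap_eventuallyEq hlap).eq_of_nhds]
  exact lap_comp_linearIsometryEquiv R (contDiffAt_lap hu (by norm_num))

theorem lap_comp_norm_sq {F F' : ℝ → ℝ} {F'' : ℝ} {x : 𝔼 N}
    (hF : ∀ᶠ r in nhds (‖x‖ ^ 2), HasDerivAt F (F' r) r) (hF' : HasDerivAt F' F'' (‖x‖ ^ 2)) :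
    lap (fun y => F (‖y‖ ^ 2)) x = 4 * ‖x‖ ^ 2 * F'' + 2 * N * F' (‖x‖ ^ 2) := by
  have hcont : ContinuousAt (fun z : 𝔼 N => ‖z‖ ^ 2) x := by fun_prop
  have hnorm (y : 𝔼 N) : HasFDerivAt (fun z : 𝔼 N => ‖z‖ ^ 2) (2 • innerSL ℝ y) y :=
    (hasStrictFDerivAt_norm_sq y).hasFDerivAt
  have hpartial (i : Fin N) : fderiv ℝ (fun y => fderiv ℝ (fun y => F (‖y‖ ^ 2)) y
      (EuclideanSpace.single i 1)) x (EuclideanSpace.single i 1)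
      = 4 * F'' * x i ^ 2 + 2 * F' (‖x‖ ^ 2) := by
    have hfirst : (fun y => fderiv ℝ (fun y => F (‖y‖ ^ 2)) y (EuclideanSpace.single i 1))
        =ᶠ[nhds x] fun y => F' (‖y‖ ^ 2) * (2 * y i) := by
      filter_upwards [hcont.eventually hF] with y hy
      rw [HasFDerivAt.fderiv (f := fun y : 𝔼 N => F (‖y‖ ^ 2)) (hy.comp_hasFDerivAt y (hnorm y))]
      simp [EuclideanSpace.inner_single_right]
    have hprod : HasFDerivAt (fun y : 𝔼 N => F' (‖y‖ ^ 2) * (2 * y i)) _ x :=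
      (hF'.comp_hasFDerivAt x (hnorm x)).mul
        ((EuclideanSpace.proj i : 𝔼 N →L[ℝ] ℝ).hasFDerivAt.const_mul 2)
    rw [hfirst.fderiv_eq, hprod.fderiv]
    simp only [add_apply, smul_apply, PiLp.proj_apply, PiLp.single_eq_same, smul_eq_mul, mul_one,
      coe_innerSL_apply, EuclideanSpace.inner_single_right, Real.ringHom_apply, one_mul,
      nsmul_eq_mul, Nat.cast_ofNat, Function.comp_apply]
    ring
  rw [lap, Finset.sum_congr rfl fun i _ => hpartial i, Finset.sum_add_distrib, ← Finset.mul_sum,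
    EuclideanSpace.norm_sq_eq]
  simp only [Real.norm_eq_abs, sq_abs, Finset.sum_const, Finset.card_univ, Fintype.card_fin,
    nsmul_eq_mul]
  ring

theorem tsupport_lap_subset (g : 𝔼 N → ℝ) : tsupport (lap g) ⊆ tsupport g := by
  refine closure_minimal (fun x hx => ?_) (isClosed_tsupport g)
  by_contra hxg
  have hzero : g =ᶠ[nhds x] fun _ => 0 := by
    filter_upwards [(isClosed_tsupport g).isOpen_compl.mem_nhds hxg] with y hy
    exact image_eq_zero_of_notMem_tsupport hy
  exact hx ((lap_eventuallyEq hzero).eq_of_nhds.trans (by simp [lap]))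

end Laplacian

section IntegrationByParts

theorem integrable_mul_of_tsupport_subset {X : Type*} [TopologicalSpace X] [MeasurableSpace X]
    [OpensMeasurableSpace X] [T2Space X] {μ : Measure X} [IsFiniteMeasureOnCompacts μ]
    {f g : X → ℝ} {K : Set X} (hK : IsCompact K) (hf : ContinuousOn f K) (hg : Continuous g)
    (hgK : tsupport g ⊆ K) : Integrable (fun x => f x * g x) μ :=
  (integrableOn_iff_integrable_of_support_subset <|
    (Function.support_mul_subset_right _ _).trans ((subset_tsupport g).trans hgK)).mp <|
    (hf.mul hg.continuousOn).integrableOn_compact hK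

theorem contDiffAt_fderiv_apply {E : Type*} [NormedAddCommGroup E] [NormedSpace ℝ E] {f : E → ℝ}
    {x : E} {m n : WithTop ℕ∞} (hf : ContDiffAt ℝ n f x) (hmn : m + 1 ≤ n) (v : E) :
    ContDiffAt ℝ m (fun y => fderiv ℝ f y v) x :=
  (hf.fderiv_right hmn).clm_apply contDiffAt_const

theorem integral_fderiv_apply_mul {E : Type*} [NormedAddCommGroup E] [NormedSpace ℝ E]
    [FiniteDimensional ℝ E] [MeasurableSpace E] [BorelSpace E] {μ : Measure E}
    [μ.IsAddHaarMeasure] {f g : E → ℝ} {K : Set E} (hK : IsCompact K)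
    (hf : ∀ x ∈ K, ContDiffAt ℝ 1 f x) (hg : ContDiff ℝ 1 g) (hgK : tsupport g ⊆ K) (v : E) :
    ∫ x, fderiv ℝ f x v * g x ∂μ = -∫ x, f x * fderiv ℝ g x v ∂μ := by
  have hf_cont : ContinuousOn f K := fun x hx => (hf x hx).continuousAt.continuousWithinAt
  have hf'_cont : ContinuousOn (fun x => fderiv ℝ f x v) K := fun x hx =>
    (contDiffAt_fderiv_apply (m := 0) (hf x hx) (by norm_num) v).continuousAt.continuousWithinAt
  have hg'_cont : Continuous fun x => fderiv ℝ g x v :=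
    ((hg.fderiv_right (m := 0) (by norm_num)).clm_apply contDiff_const).continuous
  rw [integral_mul_fderiv_eq_neg_fderiv_mul_of_integrable
    (integrable_mul_of_tsupport_subset hK hf'_cont hg.continuous hgK)
    (integrable_mul_of_tsupport_subset hK hf_cont hg'_cont
      ((tsupport_fderiv_apply_subset ℝ v).trans hgK))
    (integrable_mul_of_tsupport_subset hK hf_cont hg.continuous hgK)
    (fun x hx => (hf x (hgK hx)).differentiableAt (by norm_num))
    (fun x _ => hg.differentiable (by norm_num) x), neg_neg]

variable {N : ℕ} {K : Set 𝔼 N} {f g : 𝔼 N → ℝ}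

theorem integral_lap_mul (hK : IsCompact K) (hf : ∀ x ∈ K, ContDiffAt ℝ 2 f x)
    (hg : ContDiff ℝ 2 g) (hgK : tsupport g ⊆ K) :
    ∫ x, lap f x * g x = ∫ x, f x * lap g x := by
  have hf' (v : 𝔼 N) : ∀ x ∈ K, ContDiffAt ℝ 1 (fun y => fderiv ℝ f y v) x := fun x hx =>
    contDiffAt_fderiv_apply (hf x hx) (by norm_num) v
  have hf'' (v : 𝔼 N) : ContinuousOn (fun x => fderiv ℝ (fun y => fderiv ℝ f y v) x v) K :=
    fun x hx => (contDiffAt_fderiv_apply (m := 0) (hf' v x hx) (by norm_num)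
      v).continuousAt.continuousWithinAt
  have hg' (v : 𝔼 N) : ContDiff ℝ 1 fun y => fderiv ℝ g y v :=
    (hg.fderiv_right (by norm_num)).clm_apply contDiff_const
  have hg'' (v : 𝔼 N) : Continuous fun x => fderiv ℝ (fun y => fderiv ℝ g y v) x v :=
    (((hg' v).fderiv_right (m := 0) (by norm_num)).clm_apply contDiff_const).continuous
  have hg'K (v : 𝔼 N) : tsupport (fun y => fderiv ℝ g y v) ⊆ K :=
    (tsupport_fderiv_apply_subset ℝ v).trans hgK
  have hf_cont : ContinuousOn f K := fun x hx => (hf x hx).continuousAt.continuousWithinAt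
  simp_rw [lap, Finset.sum_mul, Finset.mul_sum]
  rw [integral_finsetSum, integral_finsetSum]
  · refine Finset.sum_congr rfl fun i _ => ?_
    rw [integral_fderiv_apply_mul hK (hf' _) (hg.of_le (by norm_num)) hgK,
      integral_fderiv_apply_mul hK (fun x hx => (hf x hx).of_le (by norm_num)) (hg' _) (hg'K _)]
    exact neg_neg _
  · exact fun i _ => integrable_mul_of_tsupport_subset hK hf_cont (hg'' _)
      ((tsupport_fderiv_apply_subset ℝ _).trans (hg'K _))
  · exact fun i _ => integrable_mul_of_tsupport_subset hK (hf'' _) hg.continuous hgK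

theorem integral_biharm_mul (hK : IsCompact K) (hf : ∀ x ∈ K, ContDiffAt ℝ 4 f x)
    (hg : ContDiff ℝ 4 g) (hgK : tsupport g ⊆ K) :
    ∫ x, biharm f x * g x = ∫ x, f x * biharm g x := by
  have hlap_f : ∀ x ∈ K, ContDiffAt ℝ 2 (lap f) x := fun x hx =>
    contDiffAt_lap (hf x hx) (by norm_num)
  have hlap_g : ContDiff ℝ 2 (lap g) :=
    contDiff_iff_contDiffAt.mpr fun x => contDiffAt_lap hg.contDiffAt (by norm_num)
  calc ∫ x, biharm f x * g x = ∫ x, lap f x * lap g x :=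
        integral_lap_mul hK hlap_f (hg.of_le (by norm_num)) hgK
    _ = ∫ x, f x * biharm g x := integral_lap_mul hK (fun x hx => (hf x hx).of_le (by norm_num))
        hlap_g ((tsupport_lap_subset g).trans hgK)

end IntegrationByParts

section Boundedness

variable {N : ℕ}

theorem continuousAt_biharm {u : 𝔼 N → ℝ} {x : 𝔼 N} (hu : ContDiffAt ℝ 4 u x) :
    ContinuousAt (biharm u) x :=
  (contDiffAt_lap (m := 0) (contDiffAt_lap (m := 2) hu (by norm_num)) (by norm_num)).continuousAt

namespace IsClassicalSolution

variable {lam : ℝ} {u : 𝔼 N → ℝ}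

theorem contDiffAt (hu : IsClassicalSolution N lam u) {x : 𝔼 N} (hx : x ∈ ball 0 1) :
    ContDiffAt ℝ 4 u x :=
  hu.contDiffOn.contDiffAt (mem_of_superset (isOpen_ball.mem_nhds hx) ball_subset_closedBall)

theorem le_biharm (hu : IsClassicalSolution N lam u) (hlam : 0 ≤ lam) {x : 𝔼 N}
    (hx : x ∈ ball 0 1) : lam ≤ biharm u x := by
  have hpos := hu.pos x hx
  have hlt := hu.lt_one x hx
  rw [hu.eqn x hx]
  exact le_div_self hlam (pow_pos (by linarith) 2) (pow_le_one₀ (by linarith) (by linarith))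

/-- Since `λ ≤ Δ²u` and `0 < u < 1`, testing the equation with `φ` bounds `λ`. -/
theorem mul_integral_le (hu : IsClassicalSolution N lam u) (hlam : 0 ≤ lam) {K : Set 𝔼 N}
    (hK : IsCompact K) (hKB : K ⊆ ball 0 1) {φ : 𝔼 N → ℝ} (hφ : ContDiff ℝ 4 φ)
    (hφ0 : ∀ x, 0 ≤ φ x) (hφK : tsupport φ ⊆ K) :
    lam * ∫ x, φ x ≤ ∫ x, |biharm φ x| := by
  have hu4 : ∀ x ∈ K, ContDiffAt ℝ 4 u x := fun x hx => hu.contDiffAt (hKB hx)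
  have hbi_cont : Continuous (biharm φ) :=
    continuous_iff_continuousAt.mpr fun x => continuousAt_biharm hφ.contDiffAt
  have hbiK : tsupport (biharm φ) ⊆ K :=
    (tsupport_lap_subset _).trans ((tsupport_lap_subset φ).trans hφK)
  rw [← integral_const_mul]
  calc ∫ x, lam * φ x ≤ ∫ x, biharm u x * φ x := by
        refine integral_mono (integrable_mul_of_tsupport_subset hK continuousOn_const
          hφ.continuous hφK) (integrable_mul_of_tsupport_subset hK (fun x hx =>
            (continuousAt_biharm (hu4 x hx)).continuousWithinAt) hφ.continuous hφK) fun x => ?_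
        by_cases hx : x ∈ K
        · exact mul_le_mul_of_nonneg_right (hu.le_biharm hlam (hKB hx)) (hφ0 x)
        · simp [image_eq_zero_of_notMem_tsupport fun h => hx (hφK h)]
    _ = ∫ x, u x * biharm φ x := integral_biharm_mul hK hu4 hφ hφK
    _ ≤ ∫ x, |biharm φ x| := by
        refine integral_mono (integrable_mul_of_tsupport_subset hK (fun x hx =>
          (hu4 x hx).continuousAt.continuousWithinAt) hbi_cont hbiK)
          (hbi_cont.integrable_of_hasCompactSupport
            (hK.of_isClosed_subset (isClosed_tsupport _) hbiK)).abs fun x => ?_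
        by_cases hx : x ∈ K
        · refine (le_abs_self _).trans ?_
          rw [abs_mul, abs_of_pos (hu.pos x (hKB hx))]
          exact mul_le_of_le_one_left (abs_nonneg _) (hu.lt_one x (hKB hx)).le
        · simp [image_eq_zero_of_notMem_tsupport fun h => hx (hbiK h)]

end IsClassicalSolution

theorem bddAbove_solSet (N : ℕ) : BddAbove (solSet N) := by
  let φ : ContDiffBump (0 : 𝔼 N) := ⟨1 / 4, 1 / 2, by norm_num, by norm_num⟩
  refine ⟨(∫ x, |biharm φ x|) / ∫ x, φ x, ?_⟩
  rintro lam ⟨hlam, u, hu⟩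
  rw [le_div_iff₀ φ.integral_pos]
  exact hu.mul_integral_le hlam.le (isCompact_closedBall 0 (1 / 2))
    (closedBall_subset_ball (by norm_num)) φ.contDiff (fun _ => φ.nonneg) φ.tsupport_eq.le

end Boundedness

section Growth

open Asymptotics
open scoped Topology

/-- `f = O(r ^ a)` as `r → 0⁺`. -/
def IsBigORpow (a : ℝ) (f : ℝ → ℝ) : Prop :=
  f =O[𝓝[>] 0] fun r => r ^ a

namespace IsBigORpow

variable {a b : ℝ} {f g : ℝ → ℝ}

theorem rpow (a : ℝ) : IsBigORpow a fun r => r ^ a :=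
  isBigO_refl _ _

theorem add (hf : IsBigORpow a f) (hg : IsBigORpow a g) : IsBigORpow a fun r => f r + g r :=
  IsBigO.add hf hg

theorem const_mul (hf : IsBigORpow a f) (c : ℝ) : IsBigORpow a fun r => c * f r :=
  IsBigO.const_mul_left hf c

theorem mul (hf : IsBigORpow a f) (hg : IsBigORpow b g) :
    IsBigORpow (a + b) fun r => f r * g r := by
  refine (IsBigO.mul hf hg).congr' .rfl ?_
  filter_upwards [self_mem_nhdsWithin] with r hr using (Real.rpow_add hr a b).symm

theorem mono (hf : IsBigORpow b f) (hab : a ≤ b) : IsBigORpow a f := by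
  refine IsBigO.trans hf (.of_bound' ?_)
  filter_upwards [Ioo_mem_nhdsGT one_pos] with r hr
  simpa only [Real.norm_eq_abs, abs_of_pos (Real.rpow_pos_of_pos hr.1 _)]
    using Real.rpow_le_rpow_of_exponent_ge hr.1 hr.2.le hab

theorem tendsto_zero (hf : IsBigORpow a f) (ha : 0 < a) : Tendsto f (𝓝[>] 0) (𝓝 0) := by
  refine IsBigO.trans_tendsto hf ?_
  simpa [Real.zero_rpow ha.ne'] using
    (Real.continuousAt_rpow_const 0 a (Or.inr ha.le)).tendsto.mono_left nhdsWithin_le_nhds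

theorem of_tendsto {c : ℝ} (hf : Tendsto f (𝓝[>] 0) (𝓝 c)) : IsBigORpow 0 f :=
  (hf.isBigO_one ℝ).congr_right fun r => (Real.rpow_zero r).symm

end IsBigORpow

end Growth

section RadialLaplacian

/-- The functions `f'` and `g` of `r ∈ (0, 1)` are the derivative and the radial Laplacian of `f`:
in the variable `r = |x|²` the Laplacian of `f` on `ℝ^M` is `4 r f'' + 2 M f'`. The dimension `M`
may be any real number. -/
structure HasRadialLaplacian (M : ℝ) (f f' g : ℝ → ℝ) : Prop where
  hasDerivAt : ∀ r ∈ Ioo (0 : ℝ) 1, HasDerivAt f (f' r) r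
  hasDerivAt_deriv : ∀ r ∈ Ioo (0 : ℝ) 1, HasDerivAt f' ((g r - 2 * M * f' r) / (4 * r)) r

/-- The symbol of the radial Laplacian on powers: `Δ |x|^(2a) = radialSymbol M a * |x|^(2(a - 1))`
on `ℝ^M`. -/
def radialSymbol (M a : ℝ) : ℝ := 2 * a * (2 * a + M - 2)

namespace HasRadialLaplacian

variable {M : ℝ} {f f' g φ φ' γ : ℝ → ℝ}

theorem add (hf : HasRadialLaplacian M f f' g) (hφ : HasRadialLaplacian M φ φ' γ) :
    HasRadialLaplacian M (fun r => f r + φ r) (fun r => f' r + φ' r) (fun r => g r + γ r) where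
  hasDerivAt r hr := (hf.hasDerivAt r hr).add (hφ.hasDerivAt r hr)
  hasDerivAt_deriv r hr := by
    convert! (hf.hasDerivAt_deriv r hr).add (hφ.hasDerivAt_deriv r hr) using 1
    ring

theorem const_mul (hf : HasRadialLaplacian M f f' g) (c : ℝ) :
    HasRadialLaplacian M (fun r => c * f r) (fun r => c * f' r) (fun r => c * g r) where
  hasDerivAt r hr := (hf.hasDerivAt r hr).const_mul c
  hasDerivAt_deriv r hr := by
    convert! (hf.hasDerivAt_deriv r hr).const_mul c using 1
    ring

theorem const (M c : ℝ) : HasRadialLaplacian M (fun _ => c) (fun _ => 0) (fun _ => 0) where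
  hasDerivAt r _ := hasDerivAt_const r c
  hasDerivAt_deriv r _ := by simpa using hasDerivAt_const r (0 : ℝ)

theorem rpow (M a : ℝ) : HasRadialLaplacian M (fun r => r ^ a) (fun r => a * r ^ (a - 1))
    (fun r => radialSymbol M a * r ^ (a - 1)) where
  hasDerivAt r hr := Real.hasDerivAt_rpow_const (Or.inl hr.1.ne')
  hasDerivAt_deriv r hr := by
    have hr0 : r ≠ 0 := hr.1.ne'
    convert! (Real.hasDerivAt_rpow_const (p := a - 1) (Or.inl hr0)).const_mul a using 1
    rw [Real.rpow_sub_one hr0 (a - 1), radialSymbol]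
    field_simp
    ring

theorem continuousOn (hf : HasRadialLaplacian M f f' g) : ContinuousOn f (Ioo 0 1) :=
  fun r hr => (hf.hasDerivAt r hr).continuousAt.continuousWithinAt

theorem hasDerivAt_flux (hf : HasRadialLaplacian M f f' g) {r : ℝ} (hr : r ∈ Ioo (0 : ℝ) 1) :
    HasDerivAt (fun s => s ^ (M / 2) * f' s) (r ^ (M / 2 - 1) / 4 * g r) r := by
  have hr0 : r ≠ 0 := hr.1.ne'
  convert! (Real.hasDerivAt_rpow_const (p := M / 2) (Or.inl hr0)).mul
    (hf.hasDerivAt_deriv r hr) using 1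
  rw [Real.rpow_sub_one hr0]
  field_simp
  ring

theorem hasDerivAt_wronskian (hf : HasRadialLaplacian M f f' g) (hφ : HasRadialLaplacian M φ φ' γ)
    {r : ℝ} (hr : r ∈ Ioo (0 : ℝ) 1) :
    HasDerivAt (fun s => s ^ (M / 2) * (f s * φ' s - φ s * f' s))
      (r ^ (M / 2 - 1) / 4 * (f r * γ r - φ r * g r)) r := by
  convert! ((hf.hasDerivAt r hr).mul (hφ.hasDerivAt_flux hr)).sub
    ((hφ.hasDerivAt r hr).mul (hf.hasDerivAt_flux hr)) using 1
  · ext s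
    simp only [Pi.sub_apply, Pi.mul_apply]
    ring
  · ring

end HasRadialLaplacian

/-- Radial functions `f`, `g = Δf` and `h = Δ²f` in the variable `r = |x|² ∈ (0, 1)`, with first
derivatives `f'` and `g'`, growing at the origin no faster than the corresponding derivatives of
`r ^ a`. -/
structure HasRadialBilaplacian (M a : ℝ) (f f' g g' h : ℝ → ℝ) : Prop where
  laplacian : HasRadialLaplacian M f f' g
  bilaplacian : HasRadialLaplacian M g g' h
  growth : IsBigORpow a f
  growth_deriv : IsBigORpow (a - 1) f'
  growth_laplacian : IsBigORpow (a - 1) g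
  growth_laplacian_deriv : IsBigORpow (a - 2) g'

/-- The boundary term of Green's second identity for the biharmonic operator, on the sphere
`|x|² = r`. -/
noncomputable def greenFlux (M : ℝ) (f f' g g' φ φ' γ γ' : ℝ → ℝ) (r : ℝ) : ℝ :=
  r ^ (M / 2) * (g r * φ' r - φ r * g' r) + r ^ (M / 2) * (f r * γ' r - γ r * f' r)

namespace HasRadialBilaplacian

variable {M a b c : ℝ} {f f' g g' h φ φ' γ γ' δ : ℝ → ℝ}

theorem add (hf : HasRadialBilaplacian M a f f' g g' h)
    (hφ : HasRadialBilaplacian M a φ φ' γ γ' δ) :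
    HasRadialBilaplacian M a (fun r => f r + φ r) (fun r => f' r + φ' r) (fun r => g r + γ r)
      (fun r => g' r + γ' r) (fun r => h r + δ r) :=
  ⟨hf.1.add hφ.1, hf.2.add hφ.2, hf.3.add hφ.3, hf.4.add hφ.4, hf.5.add hφ.5, hf.6.add hφ.6⟩

theorem const_mul (hf : HasRadialBilaplacian M a f f' g g' h) (c : ℝ) :
    HasRadialBilaplacian M a (fun r => c * f r) (fun r => c * f' r) (fun r => c * g r)
      (fun r => c * g' r) (fun r => c * h r) :=
  ⟨hf.1.const_mul c, hf.2.const_mul c, hf.3.const_mul c, hf.4.const_mul c, hf.5.const_mul c,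
    hf.6.const_mul c⟩

theorem mono (hf : HasRadialBilaplacian M b f f' g g' h) (hab : a ≤ b) :
    HasRadialBilaplacian M a f f' g g' h :=
  ⟨hf.1, hf.2, hf.3.mono hab, hf.4.mono (by linarith), hf.5.mono (by linarith),
    hf.6.mono (by linarith)⟩

theorem rpow (M a : ℝ) : HasRadialBilaplacian M a (fun r => r ^ a) (fun r => a * r ^ (a - 1))
    (fun r => radialSymbol M a * r ^ (a - 1))
    (fun r => radialSymbol M a * ((a - 1) * r ^ (a - 1 - 1)))
    (fun r => radialSymbol M a * (radialSymbol M (a - 1) * r ^ (a - 1 - 1))) where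
  laplacian := .rpow M a
  bilaplacian := (HasRadialLaplacian.rpow M (a - 1)).const_mul _
  growth := .rpow a
  growth_deriv := (IsBigORpow.rpow _).const_mul _
  growth_laplacian := (IsBigORpow.rpow _).const_mul _
  growth_laplacian_deriv :=
    (((IsBigORpow.rpow _).const_mul _).const_mul _).mono (by linarith)

theorem const (M c : ℝ) (ha : a ≤ 0) :
    HasRadialBilaplacian M a (fun _ => c) (fun _ => 0) (fun _ => 0) (fun _ => 0) (fun _ => 0) :=
  have hzero (b : ℝ) : IsBigORpow b fun _ => 0 := Asymptotics.isBigO_zero _ _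
  ⟨.const M c, .const M 0, (IsBigORpow.of_tendsto tendsto_const_nhds).mono ha, hzero _, hzero _,
    hzero _⟩

theorem hasDerivAt_greenFlux (hf : HasRadialBilaplacian M a f f' g g' h)
    (hφ : HasRadialBilaplacian M b φ φ' γ γ' δ) {r : ℝ} (hr : r ∈ Ioo (0 : ℝ) 1) :
    HasDerivAt (greenFlux M f f' g g' φ φ' γ γ')
      (r ^ (M / 2 - 1) / 4 * (f r * δ r - φ r * h r)) r := by
  convert! (hf.bilaplacian.hasDerivAt_wronskian hφ.laplacian hr).add
    (hf.laplacian.hasDerivAt_wronskian hφ.bilaplacian hr) using 1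
  ring

theorem tendsto_greenFlux_zero (hf : HasRadialBilaplacian M a f f' g g' h)
    (hφ : HasRadialBilaplacian M b φ φ' γ γ' δ) (hab : 2 < M / 2 + a + b) :
    Tendsto (greenFlux M f f' g g' φ φ' γ γ') (nhdsWithin 0 (Ioi 0)) (nhds 0) := by
  have hterm {p q : ℝ} {k l : ℝ → ℝ} (hk : IsBigORpow p k) (hl : IsBigORpow q l)
      (hpq : p + q = a + b - 2) :
      Tendsto (fun r => r ^ (M / 2) * (k r * l r)) (nhdsWithin 0 (Ioi 0)) (nhds 0) :=
    ((IsBigORpow.rpow (M / 2)).mul (hk.mul hl)).tendsto_zero (by linarith)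
  have hsum := ((hterm hf.5 hφ.4 (by ring)).sub (hterm hφ.3 hf.6 (by ring))).add
    ((hterm hf.3 hφ.6 (by ring)).sub (hterm hφ.5 hf.4 (by ring)))
  unfold greenFlux
  simpa only [mul_sub, sub_zero, add_zero] using hsum

end HasRadialBilaplacian

end RadialLaplacian

section Comparison

theorem pos_of_tendsto_zero_of_deriv_pos {f f' : ℝ → ℝ} {a b : ℝ} (hab : a < b)
    (hlim : Tendsto f (nhdsWithin a (Ioi a)) (nhds 0))
    (hderiv : ∀ r ∈ Ioc a b, HasDerivAt f (f' r) r) (hpos : ∀ r ∈ Ioo a b, 0 < f' r) :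
    0 < f b := by
  have hmono : StrictMonoOn f (Ioc a b) := strictMonoOn_of_hasDerivWithinAt_pos (convex_Ioc a b)
    (fun r hr => (hderiv r hr).continuousAt.continuousWithinAt)
    (fun r hr => (hderiv r (interior_subset hr)).hasDerivWithinAt)
    (fun r hr => hpos r (by rwa [interior_Ioc] at hr))
  obtain ⟨c, hac, hcb⟩ := exists_between hab
  have hc : 0 ≤ f c := by
    refine le_of_tendsto hlim ?_
    filter_upwards [Ioo_mem_nhdsGT hac] with r hr
    exact (hmono ⟨hr.1, (hr.2.trans hcb).le⟩ ⟨hac, hcb.le⟩ hr.2).le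
  exact hc.trans_lt (hmono ⟨hac, hcb.le⟩ ⟨hab, le_rfl⟩ hcb)

theorem exists_first_isMinOn {h : ℝ → ℝ} {a c r : ℝ} (hcont : ContinuousOn h (Ioc a c))
    (hlim : Tendsto h (nhdsWithin a (Ioi a)) atTop) (hr : r ∈ Ioo a c) (hrc : h r < h c) :
    ∃ b ∈ Ioo a c, IsMinOn h (Ioc a c) b ∧ ∀ s ∈ Ioo a b, h b < h s := by
  obtain ⟨d, had, hd⟩ : ∃ d, a < d ∧ ∀ s ∈ Ioo a d, h r < h s :=
    (mem_nhdsGT_iff_exists_Ioo_subset' hr.1).mp (hlim.eventually_gt_atTop (h r))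
  have hdr : d ≤ r := le_of_not_gt fun hrd => (hd r ⟨hr.1, hrd⟩).false
  have hK : ContinuousOn h (Icc d c) := hcont.mono fun s hs => ⟨had.trans_le hs.1, hs.2⟩
  obtain ⟨m, hm, hm_min⟩ := isCompact_Icc.exists_isMinOn ⟨r, hdr, hr.2.le⟩ hK
  have hmr : h m ≤ h r := hm_min ⟨hdr, hr.2.le⟩
  obtain ⟨b, ⟨hbK, hbm⟩, hb_least⟩ : ∃ b, IsLeast (Icc d c ∩ h ⁻¹' {h m}) b :=
    (isCompact_Icc.of_isClosed_subset (hK.preimage_isClosed_of_isClosed isClosed_Icc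
      isClosed_singleton) inter_subset_left).exists_isLeast ⟨m, hm, rfl⟩
  replace hbm : h b = h m := hbm
  refine ⟨b, ⟨had.trans_le hbK.1, hbK.2.lt_of_ne ?_⟩, fun s hs => ?_, fun s hs => ?_⟩
  · rintro rfl
    exact (hrc.trans_le (hbm.trans_le hmr)).false
  · rcases lt_or_ge s d with hsd | hds
    · exact hbm.trans_le (hmr.trans (hd s ⟨hs.1, hsd⟩).le)
    · exact hbm.trans_le (hm_min ⟨hds, hs.2⟩)
  · rcases lt_or_ge s d with hsd | hds
    · exact hbm.trans_lt (hmr.trans_lt (hd s ⟨hs.1, hsd⟩))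
    · refine hbm.trans_lt ((hm_min ⟨hds, hs.2.le.trans hbK.2⟩).lt_of_ne fun hsm => ?_)
      exact (hb_least ⟨⟨hds, hs.2.le.trans hbK.2⟩, hsm.symm⟩).not_gt hs.2

end Comparison

section Contact

variable {M a b c : ℝ} {w w' v v' e : ℝ → ℝ}

theorem HasRadialLaplacian.nonneg_of_contact (hw : HasRadialLaplacian M w w' v)
    (hb : b ∈ Ioo (0 : ℝ) 1) (hpos : ∀ r ∈ Ioo 0 b, 0 < w r) (hwb : w b = 0) (hw'b : w' b = 0) :
    0 ≤ v b := by
  by_contra! hneg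
  have hderiv : deriv w =ᶠ[nhds b] w' := by
    filter_upwards [isOpen_Ioo.mem_nhds hb] with r hr using (hw.hasDerivAt r hr).deriv
  have hconcave : deriv (deriv w) b < 0 := by
    rw [hderiv.deriv_eq, (hw.hasDerivAt_deriv b hb).deriv, hw'b, mul_zero, sub_zero]
    exact div_neg_of_neg_of_pos hneg (by linarith [hb.1])
  have hmax : IsLocalMax w b := isLocalMax_of_deriv_deriv_neg hconcave
    (hderiv.eq_of_nhds.trans hw'b) (hw.hasDerivAt b hb).continuousAt
  obtain ⟨r, hr, hrb⟩ := ((hmax.filter_mono nhdsWithin_le_nhds).and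
    (Ioo_mem_nhdsLT hb.1)).exists
  linarith [hpos r hrb]

theorem HasRadialLaplacian.deriv_pos_of_laplacian_pos (hw : HasRadialLaplacian M w w' v)
    (ha : 0 ≤ a) (hab : a < b) (hb : b < 1)
    (hflux : Tendsto (fun s => s ^ (M / 2) * w' s) (nhdsWithin a (Ioi a)) (nhds 0))
    (hv : ∀ s ∈ Ioo a b, 0 < v s) : 0 < w' b := by
  have hflux_pos := pos_of_tendsto_zero_of_deriv_pos hab hflux
    (fun s hs => hw.hasDerivAt_flux ⟨ha.trans_lt hs.1, hs.2.trans_lt hb⟩) fun s hs =>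
      mul_pos (div_pos (Real.rpow_pos_of_pos (ha.trans_lt hs.1) _) four_pos) (hv s hs)
  exact pos_of_mul_pos_right hflux_pos (Real.rpow_nonneg (ha.trans hab.le) _)

namespace HasRadialBilaplacian

theorem rpow_sub_const (M k : ℝ) {m : ℝ} (hm : m ≤ 0) :
    HasRadialBilaplacian M m (fun r => r ^ m - k) (fun r => m * r ^ (m - 1))
      (fun r => radialSymbol M m * r ^ (m - 1))
      (fun r => radialSymbol M m * ((m - 1) * r ^ (m - 1 - 1)))
      (fun r => radialSymbol M m * (radialSymbol M (m - 1) * r ^ (m - 1 - 1))) := by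
  simpa only [add_zero, ← sub_eq_add_neg] using (rpow M m).add (const M (-k) hm)

theorem radialSymbol_hardyRellich (M : ℝ) :
    radialSymbol M (-((M - 4) / 4)) * radialSymbol M (-((M - 4) / 4) - 1) =
      M ^ 2 * (M - 4) ^ 2 / 16 := by
  unfold radialSymbol
  ring

/-- Testing the equation against the Hardy–Rellich ground state `|x|^(-(M - 4) / 2)`, shifted so
that it vanishes at `r = b`. -/
theorem exists_hardyRellich_lt (hw : HasRadialBilaplacian M 0 w w' v v' e) (hM : 4 < M)
    (hc : c ≤ M ^ 2 * (M - 4) ^ 2 / 16) (hb : b ∈ Ioo (0 : ℝ) 1) (hpos : ∀ r ∈ Ioo 0 b, 0 < w r)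
    (hwb : w b = 0) (hw'b : w' b = 0) : ∃ r ∈ Ioo 0 b, c / r ^ 2 * w r < e r := by
  by_contra! hle
  set m := -((M - 4) / 4) with hm
  have hm0 : m < 0 := by linarith
  have hH : radialSymbol M m * radialSymbol M (m - 1) = M ^ 2 * (M - 4) ^ 2 / 16 :=
    radialSymbol_hardyRellich M
  rw [← hH] at hc
  have hH_pos : 0 < radialSymbol M m * radialSymbol M (m - 1) := by
    rw [hH]
    exact div_pos (mul_pos (pow_pos (by linarith) 2) (pow_pos (by linarith) 2)) (by norm_num)
  have htest := rpow_sub_const M (b ^ m) hm0.le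
  have hderiv_pos : ∀ r ∈ Ioo 0 b, 0 < r ^ (M / 2 - 1) / 4 *
      (w r * (radialSymbol M m * (radialSymbol M (m - 1) * r ^ (m - 1 - 1)))
        - (r ^ m - b ^ m) * e r) := fun r hr => by
    have hwr := hpos r hr
    have hr0 := hr.1
    have hφ : 0 ≤ r ^ m - b ^ m :=
      sub_nonneg.mpr (Real.rpow_le_rpow_of_nonpos hr.1 hr.2.le hm0.le)
    refine mul_pos (div_pos (Real.rpow_pos_of_pos hr.1 _) four_pos) (sub_pos.mpr ?_)
    calc (r ^ m - b ^ m) * e r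
        ≤ (r ^ m - b ^ m) * (radialSymbol M m * radialSymbol M (m - 1) / r ^ 2 * w r) := by
          gcongr
          exact (hle r hr).trans (by gcongr)
      _ < r ^ m * (radialSymbol M m * radialSymbol M (m - 1) / r ^ 2 * w r) := by
          gcongr
          exact sub_lt_self _ (Real.rpow_pos_of_pos hb.1 m)
      _ = w r * (radialSymbol M m * (radialSymbol M (m - 1) * r ^ (m - 1 - 1))) := by
          rw [Real.rpow_sub_one hr.1.ne', Real.rpow_sub_one hr.1.ne']
          field_simp
  have hflux_pos := pos_of_tendsto_zero_of_deriv_pos hb.1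
    (hw.tendsto_greenFlux_zero htest (by linarith))
    (fun r hr => hw.hasDerivAt_greenFlux htest ⟨hr.1, hr.2.trans_lt hb.2⟩) hderiv_pos
  simp only [greenFlux, hwb, hw'b, sub_self, zero_mul, mul_zero, sub_zero, add_zero] at hflux_pos
  exact hflux_pos.not_ge (mul_nonpos_of_nonneg_of_nonpos (Real.rpow_nonneg hb.1.le _)
    (mul_nonpos_of_nonneg_of_nonpos (hw.laplacian.nonneg_of_contact hb hpos hwb hw'b)
      (mul_nonpos_of_nonpos_of_nonneg hm0.le (Real.rpow_nonneg hb.1.le _))))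

theorem deriv_pos_of_contact (hw : HasRadialBilaplacian M a w w' v v' e) (ha : 2 < M / 2 + a)
    (he : ∀ r ∈ Ioo (0 : ℝ) 1, 0 < e r) (hb : b ∈ Ioo (0 : ℝ) 1) (hw'b : w' b = 0)
    (hvb : 0 ≤ v b) : ∀ r ∈ Ioo b 1, 0 < w' r := by
  have hv'_flux := ((IsBigORpow.rpow (M / 2)).mul hw.growth_laplacian_deriv).tendsto_zero
    (by linarith)
  have hv' : ∀ r ∈ Ioo (0 : ℝ) 1, 0 < v' r := fun r hr =>
    hw.bilaplacian.deriv_pos_of_laplacian_pos le_rfl hr.1 hr.2 hv'_flux fun s hs =>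
      he s ⟨hs.1, hs.2.trans hr.2⟩
  have hmono : StrictMonoOn v (Ioo 0 1) := strictMonoOn_of_hasDerivWithinAt_pos (convex_Ioo 0 1)
    hw.bilaplacian.continuousOn
    (fun s hs => (hw.bilaplacian.hasDerivAt s (interior_subset hs)).hasDerivWithinAt)
    (fun s hs => hv' s (interior_subset hs))
  have hv : ∀ r ∈ Ioo b 1, 0 < v r := fun r hr =>
    hvb.trans_lt (hmono hb ⟨hb.1.trans hr.1, hr.2⟩ hr.1)
  have hw'_flux : Tendsto (fun s => s ^ (M / 2) * w' s) (nhdsWithin b (Ioi b)) (nhds 0) := by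
    have hlim := (hw.laplacian.hasDerivAt_flux hb).continuousAt.tendsto
    rw [hw'b, mul_zero] at hlim
    exact hlim.mono_left nhdsWithin_le_nhds
  exact fun r hr => hw.laplacian.deriv_pos_of_laplacian_pos hb.1.le hr.1 hr.2 hw'_flux
    fun s hs => hv s ⟨hs.1, hs.2.trans hr.2⟩

end HasRadialBilaplacian

end Contact

section Profile

/-- The profile `F(|x|²) = 1 - u(x)` of a radial classical solution `u` of `(P)_λ` on `ℝ^N`, with
`V(|x|²)` its Laplacian. The last two fields are the Dirichlet conditions for `u`. -/
structure IsRadialProfile (N : ℕ) (lam : ℝ) (F F' V V' : ℝ → ℝ) : Prop where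
  bilaplacian : HasRadialBilaplacian N 0 F F' V V' fun r => -(lam / F r ^ 2)
  pos : ∀ r ∈ Ioo (0 : ℝ) 1, 0 < F r
  tendsto_pos : ∃ c > 0, Tendsto F (nhdsWithin 0 (Ioi 0)) (nhds c)
  apply_one : F 1 = 1
  hasDerivWithinAt_one : HasDerivWithinAt F 0 (Iic 1) 1

theorem radialSymbol_two_thirds (N : ℕ) :
    radialSymbol N (2 / 3) * radialSymbol N (2 / 3 - 1) = -lamBar N := by
  unfold radialSymbol lamBar
  ring

theorem two_mul_lamBar_le {N : ℕ} (hN : 9 ≤ N) :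
    2 * lamBar N ≤ (N : ℝ) ^ 2 * ((N : ℝ) - 4) ^ 2 / 16 := by
  obtain ⟨k, rfl⟩ := Nat.exists_eq_add_of_le hN
  have hk : (0 : ℝ) ≤ k := Nat.cast_nonneg k
  unfold lamBar
  push_cast
  nlinarith [pow_nonneg hk 2, pow_nonneg hk 3, pow_nonneg hk 4]

theorem lamBar_pos {N : ℕ} (hN : 9 ≤ N) : 0 < lamBar N := by
  have hN' : (9 : ℝ) ≤ N := mod_cast hN
  exact mul_pos (mul_pos (by norm_num) (by linarith)) (by linarith)

theorem rpow_two_thirds_pow_three {r : ℝ} (hr : 0 ≤ r) : (r ^ (2 / 3 : ℝ)) ^ 3 = r ^ 2 := by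
  rw [← Real.rpow_mul_natCast hr, ← Real.rpow_natCast]
  norm_num

theorem sub_cube_div_sq_le {t y : ℝ} (hy : 0 < y) (hyt : y ≤ t) :
    y - y ^ 3 / t ^ 2 ≤ 2 * (t - y) := by
  have ht : 0 < t := hy.trans_le hyt
  rw [sub_le_iff_le_add, ← sub_le_iff_le_add', le_div_iff₀ (by positivity)]
  nlinarith [mul_nonneg (sq_nonneg (t - y)) (by linarith : 0 ≤ 2 * t + y)]

namespace IsRadialProfile

variable {N : ℕ} {lam A b : ℝ} {F F' V V' : ℝ → ℝ}

theorem continuousOn (hF : IsRadialProfile N lam F F' V V') : ContinuousOn F (Ioc 0 1) :=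
  fun r hr => by
    rcases hr.2.eq_or_lt with rfl | hr1
    · exact hF.hasDerivWithinAt_one.continuousWithinAt.mono fun s hs => hs.2
    · exact (hF.bilaplacian.laplacian.hasDerivAt r ⟨hr.1, hr1⟩).continuousAt.continuousWithinAt

/-- Scaling `r ^ (2/3)` down until it touches `F` from below. -/
theorem exists_contact (hF : IsRadialProfile N lam F F' V V') {r : ℝ} (hr : r ∈ Ioo (0 : ℝ) 1)
    (hlt : F r < r ^ (2 / 3 : ℝ)) :
    ∃ A > 0, ∃ b ∈ Ioo (0 : ℝ) 1, (∀ s ∈ Ioc (0 : ℝ) 1, A * s ^ (2 / 3 : ℝ) ≤ F s) ∧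
      (∀ s ∈ Ioo 0 b, A * s ^ (2 / 3 : ℝ) < F s) ∧ F b = A * b ^ (2 / 3 : ℝ) := by
  have hpow {s : ℝ} (hs : 0 < s) : 0 < s ^ (2 / 3 : ℝ) := Real.rpow_pos_of_pos hs _
  have hcont : ContinuousOn (fun s => F s / s ^ (2 / 3 : ℝ)) (Ioc 0 1) :=
    hF.continuousOn.div (Real.continuous_rpow_const (by norm_num)).continuousOn
      fun s hs => (hpow hs.1).ne'
  have hlim : Tendsto (fun s => F s / s ^ (2 / 3 : ℝ)) (nhdsWithin 0 (Ioi 0)) atTop := by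
    obtain ⟨c, hc, hFc⟩ := hF.tendsto_pos
    refine hFc.pos_mul_atTop hc (Tendsto.inv_tendsto_nhdsGT_zero (tendsto_nhdsWithin_iff.mpr
      ⟨(IsBigORpow.rpow (2 / 3)).tendsto_zero (by norm_num), ?_⟩))
    filter_upwards [self_mem_nhdsWithin] with s hs using hpow hs
  obtain ⟨b, hb, hmin, hfirst⟩ := exists_first_isMinOn hcont hlim hr <| by
    rwa [hF.apply_one, Real.one_rpow, div_one, div_lt_one (hpow hr.1)]
  refine ⟨F b / b ^ (2 / 3 : ℝ), div_pos (hF.pos b hb) (hpow hb.1), b, hb, fun s hs => ?_,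
    fun s hs => ?_, (div_mul_cancel₀ _ (hpow hb.1).ne').symm⟩
  · exact (le_div_iff₀ (hpow hs.1)).mp (hmin hs)
  · exact (lt_div_iff₀ (hpow hs.1)).mp (hfirst s hs)

theorem sub_rpow (hF : IsRadialProfile N lam F F' V V') (A : ℝ) :
    HasRadialBilaplacian N 0 (fun r => F r + -A * r ^ (2 / 3 : ℝ))
      (fun r => F' r + -A * (2 / 3 * r ^ (2 / 3 - 1 : ℝ)))
      (fun r => V r + -A * (radialSymbol N (2 / 3) * r ^ (2 / 3 - 1 : ℝ)))
      (fun r => V' r +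
        -A * (radialSymbol N (2 / 3) * ((2 / 3 - 1) * r ^ (2 / 3 - 1 - 1 : ℝ))))
      (fun r => -(lam / F r ^ 2) +
        -A * (radialSymbol N (2 / 3) * (radialSymbol N (2 / 3 - 1) * r ^ (2 / 3 - 1 - 1 : ℝ)))) :=
  hF.bilaplacian.add (((HasRadialBilaplacian.rpow N (2 / 3)).mono (by norm_num)).const_mul (-A))

theorem bilaplacian_sub_rpow {r : ℝ} (hr : 0 < r) (lam A t : ℝ) (N : ℕ) :
    -(lam / t ^ 2) +
        -A * (radialSymbol N (2 / 3) * (radialSymbol N (2 / 3 - 1) * r ^ (2 / 3 - 1 - 1 : ℝ))) =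
      lamBar N * (A * r ^ (2 / 3 : ℝ)) / r ^ 2 - lam / t ^ 2 := by
  rw [← mul_assoc (radialSymbol _ _), radialSymbol_two_thirds, Real.rpow_sub_one hr.ne',
    Real.rpow_sub_one hr.ne']
  field_simp
  ring

/-- If the contact constant `A` satisfies `A³ λ̄ ≤ λ`, then `w = F - A r ^ (2/3)` is a
subsolution of `Δ²w ≤ 2 λ̄ w / |x|⁴`, which Hardy–Rellich excludes. -/
theorem lt_cube_mul_lamBar_of_contact (hF : IsRadialProfile N lam F F' V V') (hN : 9 ≤ N)
    (hA : 0 < A) (hb : b ∈ Ioo (0 : ℝ) 1) (hlt : ∀ s ∈ Ioo 0 b, A * s ^ (2 / 3 : ℝ) < F s)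
    (hFb : F b = A * b ^ (2 / 3 : ℝ)) (hF'b : F' b + -A * (2 / 3 * b ^ (2 / 3 - 1 : ℝ)) = 0) :
    lam < A ^ 3 * lamBar N := by
  have hN' : (9 : ℝ) ≤ N := mod_cast hN
  by_contra! hle
  obtain ⟨r, hr, hlt_r⟩ := (hF.sub_rpow A).exists_hardyRellich_lt (by linarith)
    (two_mul_lamBar_le hN) hb (fun s hs => by linarith [hlt s hs]) (by linarith) hF'b
  have hr0 : 0 < r := hr.1
  have hlam := lamBar_pos hN
  rw [bilaplacian_sub_rpow hr0] at hlt_r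
  have hy : 0 < A * r ^ (2 / 3 : ℝ) := mul_pos hA (Real.rpow_pos_of_pos hr0 _)
  have hy3 : (A * r ^ (2 / 3 : ℝ)) ^ 3 = A ^ 3 * r ^ 2 := by
    rw [mul_pow, rpow_two_thirds_pow_three hr0.le]
  have hyF := hlt r hr
  rw [neg_mul, ← sub_eq_add_neg] at hlt_r
  generalize A * r ^ (2 / 3 : ℝ) = y at *
  have hF0 : 0 < F r := hy.trans hyF
  refine hlt_r.not_ge ?_
  calc lamBar N * y / r ^ 2 - lam / F r ^ 2
      ≤ lamBar N * y / r ^ 2 - A ^ 3 * lamBar N / F r ^ 2 := by gcongr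
    _ = lamBar N / r ^ 2 * (y - y ^ 3 / F r ^ 2) := by
        rw [hy3]
        field_simp
    _ ≤ lamBar N / r ^ 2 * (2 * (F r - y)) := by
        gcongr
        exact sub_cube_div_sq_le hy hyF.le
    _ = 2 * lamBar N / r ^ 2 * (F r - y) := by ring

/-- If `λ < A³ λ̄`, then `Δ²w > 0`, so `w = F - A r ^ (2/3)` increases beyond the contact point. -/
theorem monotoneOn_of_contact (hF : IsRadialProfile N lam F F' V V') (hN : 9 ≤ N) (hA : 0 < A)
    (hlam : lam < A ^ 3 * lamBar N) (hb : b ∈ Ioo (0 : ℝ) 1)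
    (hle : ∀ s ∈ Ioc (0 : ℝ) 1, A * s ^ (2 / 3 : ℝ) ≤ F s)
    (hlt : ∀ s ∈ Ioo 0 b, A * s ^ (2 / 3 : ℝ) < F s)
    (hFb : F b = A * b ^ (2 / 3 : ℝ)) (hF'b : F' b + -A * (2 / 3 * b ^ (2 / 3 - 1 : ℝ)) = 0) :
    MonotoneOn (fun r => F r + -A * r ^ (2 / 3 : ℝ)) (Icc b 1) := by
  have hN' : (9 : ℝ) ≤ N := mod_cast hN
  have hw := hF.sub_rpow A
  have he : ∀ r ∈ Ioo (0 : ℝ) 1, 0 < -(lam / F r ^ 2) + -A *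
      (radialSymbol N (2 / 3) * (radialSymbol N (2 / 3 - 1) * r ^ (2 / 3 - 1 - 1 : ℝ))) :=
    fun r hr => by
      have hr0 : 0 < r := hr.1
      have hlamBar := lamBar_pos hN
      rw [bilaplacian_sub_rpow hr0, sub_pos]
      calc lam / F r ^ 2 < A ^ 3 * lamBar N / F r ^ 2 := by
            have hF0 := hF.pos r hr
            gcongr
        _ ≤ A ^ 3 * lamBar N / (A * r ^ (2 / 3 : ℝ)) ^ 2 := by
            gcongr
            exact hle r ⟨hr0, hr.2.le⟩
        _ = lamBar N * (A * r ^ (2 / 3 : ℝ)) / r ^ 2 := by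
            rw [← rpow_two_thirds_pow_three hr0.le]
            field_simp
  have hw' := hw.deriv_pos_of_contact (by linarith) he hb hF'b
    (hw.laplacian.nonneg_of_contact hb (fun s hs => by linarith [hlt s hs]) (by linarith) hF'b)
  refine monotoneOn_of_hasDerivWithinAt_nonneg (convex_Icc b 1)
    ((hF.continuousOn.mono fun s hs => ⟨hb.1.trans_le hs.1, hs.2⟩).add
      ((Real.continuous_rpow_const (by norm_num)).const_mul (-A)).continuousOn)
    (fun r hr => ?_) (fun r hr => ?_) (f' := fun r => F' r + -A * (2 / 3 * r ^ (2 / 3 - 1 : ℝ)))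
  all_goals rw [interior_Icc] at hr
  · exact (hw.laplacian.hasDerivAt r ⟨hb.1.trans hr.1, hr.2⟩).hasDerivWithinAt
  · exact (hw' r hr).le

theorem rpow_two_thirds_le (hF : IsRadialProfile N lam F F' V V') (hN : 9 ≤ N) :
    ∀ r ∈ Ioo (0 : ℝ) 1, r ^ (2 / 3 : ℝ) ≤ F r := by
  by_contra! ⟨r, hr, hlt_r⟩
  obtain ⟨A, hA, b, hb, hle, hlt, hFb⟩ := hF.exists_contact hr hlt_r
  have hcontact : IsLocalMin (fun r => F r + -A * r ^ (2 / 3 : ℝ)) b := by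
    filter_upwards [Ioo_mem_nhds hb.1 hb.2] with s hs
    linarith [hle s ⟨hs.1, hs.2.le⟩]
  have hF'b := hcontact.hasDerivAt_eq_zero ((hF.sub_rpow A).laplacian.hasDerivAt b hb)
  have hlam := hF.lt_cube_mul_lamBar_of_contact hN hA hb hlt hFb hF'b
  have hderiv := (hF.hasDerivWithinAt_one.mono fun s (hs : s ∈ Icc b 1) => hs.2).add
    ((Real.hasDerivAt_rpow_const (p := 2 / 3) (Or.inl one_ne_zero)).const_mul
      (-A)).hasDerivWithinAt
  rw [Real.one_rpow] at hderiv
  have hacc : AccPt (1 : ℝ) (Filter.principal (Icc b 1)) :=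
    uniqueDiffWithinAt_iff_accPt.mp (uniqueDiffOn_Icc hb.2 1 ⟨hb.2.le, le_rfl⟩)
  linarith [hderiv.nonneg_of_monotoneOn hacc
    (hF.monotoneOn_of_contact hN hA hlam hb hle hlt hFb hF'b)]

end IsRadialProfile

end Profile

section RadialAverage

/-- The average `∫₀¹ w(σ) D(ρσ²) dσ` of the dilations of `D`. -/
noncomputable def dilationAverage (w D : ℝ → ℝ) (ρ : ℝ) : ℝ :=
  ∫ σ in (0 : ℝ)..1, w σ * D (ρ * σ ^ 2)

/-- The average of `D(|x|²)` over the ball of radius `√ρ` in `ℝ^N`, up to the factor `2 / N`. -/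
noncomputable def radialAverage (N : ℕ) : (ℝ → ℝ) → ℝ → ℝ :=
  dilationAverage fun σ => 2 * σ ^ (N - 1)

/-- The radial solution of `Δφ = D(|x|²)` on `ℝ^N` with `φ(0) = 0`, as a function of `ρ = |x|²`. -/
noncomputable def radialPotential (N : ℕ) (D : ℝ → ℝ) (ρ : ℝ) : ℝ :=
  ∫ t in (0 : ℝ)..ρ, radialAverage N D t / 4

/-- The radial solution of `Δ²φ = D(|x|²)` on `ℝ^N` with `φ = ∂_ν φ = 0` on the unit sphere, as a
function of `ρ = |x|²`. -/
noncomputable def clampedPotential (N : ℕ) (D : ℝ → ℝ) (ρ : ℝ) : ℝ :=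
  radialPotential N (radialPotential N D) ρ - radialPotential N (radialPotential N D) 1
    - radialAverage N (radialPotential N D) 1 / 4 * (ρ - 1)

variable {N : ℕ} {w D G : ℝ → ℝ} {C ρ τ : ℝ}

theorem continuous_dilationAverage (hw : Continuous w) (hD : Continuous D) :
    Continuous (dilationAverage w D) := by
  refine intervalIntegral.continuous_parametric_intervalIntegral_of_continuous' ?_ 0 1
  simp only [Function.uncurry_def]
  fun_prop

theorem intervalIntegrable_dilation (hw : Continuous w) (hD : Continuous D) (ρ : ℝ) :
    IntervalIntegrable (fun σ => w σ * D (ρ * σ ^ 2)) volume 0 1 :=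
  Continuous.intervalIntegrable (by fun_prop) _ _

theorem hasDerivAt_dilationAverage (hw : Continuous w) (hD : ContDiff ℝ 1 D) (ρ : ℝ) :
    HasDerivAt (dilationAverage w D) (dilationAverage (fun σ => w σ * σ ^ 2) (deriv D) ρ) ρ := by
  have hDc := hD.continuous
  have : Continuous (deriv D) := hD.continuous_deriv le_rfl
  obtain ⟨C, hC⟩ : ∃ C, ∀ z ∈ Icc (ρ - 1) (ρ + 1) ×ˢ Icc (0 : ℝ) 1,
      ‖w z.2 * z.2 ^ 2 * deriv D (z.1 * z.2 ^ 2)‖ ≤ C :=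
    (isCompact_Icc.prod isCompact_Icc).exists_bound_of_continuousOn (by fun_prop)
  refine (intervalIntegral.hasDerivAt_integral_of_dominated_loc_of_deriv_le
    (F := fun ρ σ => w σ * D (ρ * σ ^ 2)) (F' := fun ρ σ => w σ * σ ^ 2 * deriv D (ρ * σ ^ 2))
    (bound := fun _ => C) (Icc_mem_nhds (sub_one_lt ρ) (lt_add_one ρ))
    (.of_forall fun _ => Continuous.aestronglyMeasurable (by fun_prop))
    (intervalIntegrable_dilation hw hDc ρ) (Continuous.aestronglyMeasurable (by fun_prop))
    (.of_forall fun σ hσ x hx => ?_) intervalIntegrable_const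
    (.of_forall fun σ _ x _ => ?_)).2
  · rw [uIoc_of_le zero_le_one] at hσ
    exact hC (x, σ) ⟨hx, hσ.1.le, hσ.2⟩
  · have hdil : HasDerivAt (fun x : ℝ => x * σ ^ 2) (σ ^ 2) x := by
      simpa using (hasDerivAt_id x).mul_const (σ ^ 2)
    convert! (((hD.differentiable one_ne_zero _).hasDerivAt.comp x hdil).const_mul (w σ)) using 1
    ring

theorem contDiff_dilationAverage (n : ℕ) (hw : Continuous w) (hD : ContDiff ℝ n D) :
    ContDiff ℝ n (dilationAverage w D) := by
  induction n generalizing w D with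
  | zero => exact contDiff_zero.mpr (continuous_dilationAverage hw (contDiff_zero.mp hD))
  | succ n ih =>
    push_cast at hD ⊢
    have hderiv := hasDerivAt_dilationAverage hw (hD.of_le le_add_self)
    rw [contDiff_succ_iff_deriv]
    refine ⟨fun ρ => (hderiv ρ).differentiableAt, by simp, ?_⟩
    rw [funext fun ρ => (hderiv ρ).deriv]
    exact ih (by fun_prop) (contDiff_succ_iff_deriv.mp hD).2.2

theorem continuous_radialAverage (hD : Continuous D) : Continuous (radialAverage N D) :=
  continuous_dilationAverage (by fun_prop) hD

theorem hasDerivAt_radialAverage (hD : ContDiff ℝ 1 D) (ρ : ℝ) :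
    HasDerivAt (radialAverage N D) (deriv (radialAverage N D) ρ) ρ :=
  (hasDerivAt_dilationAverage (by fun_prop) hD ρ).differentiableAt.hasDerivAt

/-- The divergence theorem: the integrand of the left-hand side is `d/dσ (σ^N D(ρσ²))`. -/
theorem radialAverage_eqn (hN : N ≠ 0) (hD : ContDiff ℝ 1 D) (ρ : ℝ) :
    ρ * deriv (radialAverage N D) ρ + N / 2 * radialAverage N D ρ = D ρ := by
  have hDc := hD.continuous
  have : Continuous (deriv D) := hD.continuous_deriv le_rfl
  have hflux : ∀ σ : ℝ, HasDerivAt (fun σ : ℝ => σ ^ N * D (ρ * σ ^ 2))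
      (ρ * (2 * σ ^ (N - 1) * σ ^ 2 * deriv D (ρ * σ ^ 2))
        + N / 2 * (2 * σ ^ (N - 1) * D (ρ * σ ^ 2))) σ := fun σ => by
    convert! (hasDerivAt_pow N σ).mul ((hD.differentiable one_ne_zero _).hasDerivAt.comp σ
      ((hasDerivAt_pow 2 σ).const_mul ρ)) using 1
    obtain ⟨k, rfl⟩ := Nat.exists_eq_succ_of_ne_zero hN
    simp only [Nat.succ_eq_add_one, add_tsub_cancel_right, Function.comp_apply]
    push_cast
    ring
  rw [radialAverage, (hasDerivAt_dilationAverage (by fun_prop) hD ρ).deriv, dilationAverage,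
    dilationAverage, ← intervalIntegral.integral_const_mul, ← intervalIntegral.integral_const_mul,
    ← intervalIntegral.integral_add (Continuous.intervalIntegrable (by fun_prop) _ _)
      (Continuous.intervalIntegrable (by fun_prop) _ _),
    intervalIntegral.integral_eq_sub_of_hasDerivAt (fun σ _ => hflux σ)
      (Continuous.intervalIntegrable (by fun_prop) _ _)]
  simp [hN]

theorem radialAverage_sub (hD : Continuous D) (hG : Continuous G) (ρ : ℝ) :
    radialAverage N (fun s => D s - G s) ρ = radialAverage N D ρ - radialAverage N G ρ := by
  simp only [radialAverage, dilationAverage, mul_sub]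
  exact intervalIntegral.integral_sub (intervalIntegrable_dilation (by fun_prop) hD ρ)
    (intervalIntegrable_dilation (by fun_prop) hG ρ)

theorem radialAverage_lt_radialAverage (hD : Continuous D) (hG : Continuous G)
    (h : ∀ σ ∈ Ioo (0 : ℝ) 1, D (ρ * σ ^ 2) < G (τ * σ ^ 2)) :
    radialAverage N D ρ < radialAverage N G τ := by
  have hw : Continuous fun σ : ℝ => 2 * σ ^ (N - 1) := by fun_prop
  have hDi := intervalIntegrable_dilation hw hD ρ
  have hGi := intervalIntegrable_dilation hw hG τ
  rw [← sub_pos]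
  simp only [radialAverage, dilationAverage]
  rw [← intervalIntegral.integral_sub hGi hDi]
  refine intervalIntegral.intervalIntegral_pos_of_pos_on (hGi.sub hDi) (fun σ hσ => ?_) one_pos
  exact sub_pos.mpr (mul_lt_mul_of_pos_left (h σ hσ) (mul_pos two_pos (pow_pos hσ.1 _)))

theorem mul_sq_mem_Icc (hρ : ρ ∈ Icc (0 : ℝ) 1) {σ : ℝ} (hσ : σ ∈ Icc (0 : ℝ) 1) :
    ρ * σ ^ 2 ∈ Icc (0 : ℝ) 1 :=
  unitInterval.mul_mem hρ (pow_mem (S := unitInterval.submonoid) hσ 2)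

theorem abs_radialAverage_le (h : ∀ r ∈ Icc (0 : ℝ) 1, |D r| ≤ C) :
    ∀ r ∈ Icc (0 : ℝ) 1, |radialAverage N D r| ≤ 2 * C := by
  intro r hr
  have hbound := intervalIntegral.norm_integral_le_of_norm_le_const (a := 0) (b := 1) (C := 2 * C)
    (f := fun σ : ℝ => 2 * σ ^ (N - 1) * D (r * σ ^ 2)) fun σ hσ => by
      rw [uIoc_of_le zero_le_one] at hσ
      rw [norm_mul, Real.norm_of_nonneg (mul_nonneg zero_le_two (pow_nonneg hσ.1.le _))]
      exact mul_le_mul (mul_le_of_le_one_right zero_le_two (pow_le_one₀ hσ.1.le hσ.2))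
        (h _ (mul_sq_mem_Icc hr ⟨hσ.1.le, hσ.2⟩)) (abs_nonneg _) zero_le_two
  rwa [sub_zero, abs_one, mul_one] at hbound

theorem hasDerivAt_radialPotential (hD : Continuous D) (ρ : ℝ) :
    HasDerivAt (radialPotential N D) (radialAverage N D ρ / 4) ρ :=
  ((continuous_radialAverage hD).div_const 4).integral_hasStrictDerivAt 0 ρ |>.hasDerivAt

theorem continuous_radialPotential (hD : Continuous D) : Continuous (radialPotential N D) :=
  continuous_iff_continuousAt.mpr fun ρ => (hasDerivAt_radialPotential hD ρ).continuousAt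

theorem contDiff_radialPotential (n : ℕ) (hD : ContDiff ℝ n D) :
    ContDiff ℝ (n + 1) (radialPotential N D) := by
  have hderiv := hasDerivAt_radialPotential (N := N) hD.continuous
  rw [contDiff_succ_iff_deriv]
  refine ⟨fun ρ => (hderiv ρ).differentiableAt, by simp, ?_⟩
  rw [funext fun ρ => (hderiv ρ).deriv]
  exact (contDiff_dilationAverage n (by fun_prop) hD).div_const 4

theorem radialPotential_sub (hD : Continuous D) (hG : Continuous G) (ρ : ℝ) :
    radialPotential N (fun s => D s - G s) ρ = radialPotential N D ρ - radialPotential N G ρ := by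
  simp only [radialPotential, radialAverage_sub hD hG, sub_div]
  exact intervalIntegral.integral_sub
    (((continuous_radialAverage hD).div_const 4).intervalIntegrable _ _)
    (((continuous_radialAverage hG).div_const 4).intervalIntegrable _ _)

theorem abs_radialPotential_le (h : ∀ r ∈ Icc (0 : ℝ) 1, |D r| ≤ C) :
    ∀ r ∈ Icc (0 : ℝ) 1, |radialPotential N D r| ≤ C / 2 := by
  intro r hr
  have : 0 ≤ C := (abs_nonneg _).trans (h r hr)
  refine (intervalIntegral.norm_integral_le_of_norm_le_const (C := C / 2)
    (f := fun t => radialAverage N D t / 4) fun t ht => ?_).trans ?_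
  · rw [uIoc_of_le hr.1] at ht
    rw [norm_div, Real.norm_ofNat, Real.norm_eq_abs, div_le_iff₀ four_pos]
    linarith [abs_radialAverage_le (N := N) h t ⟨ht.1.le, ht.2.trans hr.2⟩]
  · rw [sub_zero, abs_of_nonneg hr.1]
    exact mul_le_of_le_one_right (by positivity) hr.2

theorem lap_radialPotential_add_affine (hN : N ≠ 0) (hD : ContDiff ℝ 1 D) (c a b : ℝ) (x : 𝔼 N) :
    lap (fun y => c * radialPotential N D (‖y‖ ^ 2) + (a * ‖y‖ ^ 2 + b)) x =
      c * D (‖x‖ ^ 2) + 2 * N * a := by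
  rw [lap_comp_norm_sq (F := fun r => c * radialPotential N D r + (a * r + b))
    (F' := fun r => c * (radialAverage N D r / 4) + a)
    (.of_forall fun r => ((hasDerivAt_radialPotential hD.continuous r).const_mul c).add <| by
      simpa using ((hasDerivAt_id r).const_mul a).add_const b)
    ((((hasDerivAt_radialAverage hD _).div_const 4).const_mul c).add_const a),
    ← radialAverage_eqn hN hD (‖x‖ ^ 2)]
  ring

theorem hasDerivAt_clampedPotential (hD : Continuous D) (ρ : ℝ) :
    HasDerivAt (clampedPotential N D) ((radialAverage N (radialPotential N D) ρ
      - radialAverage N (radialPotential N D) 1) / 4) ρ := by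
  have h := hasDerivAt_radialPotential (N := N) (continuous_radialPotential (N := N) hD) ρ
  convert! (h.sub_const _).sub (((hasDerivAt_id ρ).sub_const 1).const_mul _) using 1
  ring

theorem clampedPotential_one : clampedPotential N D 1 = 0 := by
  simp [clampedPotential]

theorem continuous_clampedPotential (hD : Continuous D) : Continuous (clampedPotential N D) :=
  continuous_iff_continuousAt.mpr fun ρ => (hasDerivAt_clampedPotential hD ρ).continuousAt

theorem contDiff_clampedPotential (n : ℕ) (hD : ContDiff ℝ n D) :
    ContDiff ℝ (n + 1 + 1) (clampedPotential N D) :=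
  ((contDiff_radialPotential (n + 1) (mod_cast contDiff_radialPotential n hD)).sub
    contDiff_const).sub (contDiff_const.mul (contDiff_id.sub contDiff_const))

theorem clampedPotential_sub (hD : Continuous D) (hG : Continuous G) (ρ : ℝ) :
    clampedPotential N (fun s => D s - G s) ρ =
      clampedPotential N D ρ - clampedPotential N G ρ := by
  have hD₁ := continuous_radialPotential (N := N) hD
  have hG₁ := continuous_radialPotential (N := N) hG
  unfold clampedPotential
  rw [funext (radialPotential_sub hD hG), radialPotential_sub hD₁ hG₁,
    radialPotential_sub hD₁ hG₁, radialAverage_sub hD₁ hG₁]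
  ring

theorem abs_clampedPotential_le (h : ∀ r ∈ Icc (0 : ℝ) 1, |D r| ≤ C) :
    ∀ r ∈ Icc (0 : ℝ) 1, |clampedPotential N D r| ≤ C := by
  intro r hr
  have h₁ := abs_radialPotential_le (N := N) h
  have h₂ := abs_radialPotential_le (N := N) h₁
  have hone : (1 : ℝ) ∈ Icc (0 : ℝ) 1 := right_mem_Icc.mpr zero_le_one
  have hslope : ‖radialAverage N (radialPotential N D) 1 / 4 * (r - 1)‖ ≤ C / 4 * 1 := by
    rw [norm_mul, norm_div, Real.norm_ofNat, Real.norm_eq_abs, Real.norm_eq_abs]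
    refine mul_le_mul ?_ (abs_le.mpr ⟨by linarith [hr.1], by linarith [hr.2]⟩) (abs_nonneg _)
      (by linarith [abs_nonneg (D r), h r hr])
    linarith [abs_radialAverage_le (N := N) h₁ 1 hone]
  unfold clampedPotential
  refine (norm_sub_le_of_le (norm_sub_le_of_le (h₂ r hr) (h₂ 1 hone)) hslope).trans ?_
  linarith [abs_nonneg (D r), h r hr]

theorem clampedPotential_congr (hD : Continuous D) (hG : Continuous G)
    (h : EqOn D G (Icc 0 1)) : EqOn (clampedPotential N D) (clampedPotential N G) (Icc 0 1) := by
  intro r hr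
  rw [← sub_eq_zero, ← clampedPotential_sub hD hG, ← abs_nonpos_iff]
  exact abs_clampedPotential_le (fun s hs => by rw [h hs, sub_self, abs_zero]) r hr

theorem strictMonoOn_radialPotential (hD : Continuous D) (hpos : ∀ r ∈ Icc (0 : ℝ) 1, 0 < D r) :
    StrictMonoOn (radialPotential N D) (Icc 0 1) := by
  refine strictMonoOn_of_hasDerivWithinAt_pos (convex_Icc 0 1)
    (continuous_radialPotential hD).continuousOn
    (fun r _ => (hasDerivAt_radialPotential hD r).hasDerivWithinAt) fun r hr => ?_
  rw [interior_Icc] at hr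
  refine div_pos ?_ four_pos
  have hlt := radialAverage_lt_radialAverage (N := N) (ρ := r) (τ := r) continuous_zero hD
    fun σ hσ => hpos _ (mul_sq_mem_Icc (Ioo_subset_Icc_self hr) (Ioo_subset_Icc_self hσ))
  simpa [radialAverage, dilationAverage] using hlt

theorem strictAntiOn_clampedPotential (hD : Continuous D) (hpos : ∀ r ∈ Icc (0 : ℝ) 1, 0 < D r) :
    StrictAntiOn (clampedPotential N D) (Icc 0 1) := by
  refine strictAntiOn_of_hasDerivWithinAt_neg (convex_Icc 0 1)
    (continuous_clampedPotential hD).continuousOn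
    (fun r _ => (hasDerivAt_clampedPotential hD r).hasDerivWithinAt) fun r hr => ?_
  rw [interior_Icc] at hr
  have hone : (1 : ℝ) ∈ Icc (0 : ℝ) 1 := right_mem_Icc.mpr zero_le_one
  have hK := continuous_radialPotential (N := N) hD
  refine div_neg_of_neg_of_pos (sub_neg.mpr ?_) four_pos
  refine radialAverage_lt_radialAverage hK hK fun σ hσ => ?_
  exact strictMonoOn_radialPotential hD hpos
    (mul_sq_mem_Icc (Ioo_subset_Icc_self hr) (Ioo_subset_Icc_self hσ))
    (mul_sq_mem_Icc hone (Ioo_subset_Icc_self hσ))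
    (mul_lt_mul_of_pos_right hr.2 (pow_pos hσ.1 2))

theorem biharm_clampedPotential (hN : N ≠ 0) (hD : ContDiff ℝ 1 D) (c : ℝ) (x : 𝔼 N) :
    biharm (fun y => c * clampedPotential N D (‖y‖ ^ 2)) x = c * D (‖x‖ ^ 2) := by
  set K := radialPotential N D
  have hK : ContDiff ℝ 1 K := mod_cast contDiff_radialPotential 0 (contDiff_zero.mpr hD.continuous)
  have hlap : lap (fun y : 𝔼 N => c * clampedPotential N D (‖y‖ ^ 2)) = fun y =>
      c * K (‖y‖ ^ 2) + (0 * ‖y‖ ^ 2 + 2 * N * (-(c * (radialAverage N K 1 / 4)))) := by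
    ext y
    rw [zero_mul, zero_add, ← lap_radialPotential_add_affine hN hK c _
      (c * (radialAverage N K 1 / 4 - radialPotential N K 1)) y]
    congr 1
    ext z
    rw [clampedPotential]
    ring
  rw [biharm, hlap, lap_radialPotential_add_affine hN hD, mul_zero, add_zero]

end RadialAverage

section Existence

open scoped NNReal BoundedContinuousFunction

theorem exists_eqOn_comp_clampedPotential (N : ℕ) {g : ℝ → ℝ} {K : ℝ≥0} {C : ℝ}
    (hg : ContDiff ℝ 2 g) (hK : K < 1) (hLip : LipschitzWith K g) (hbound : ∀ s, |g s| ≤ C) :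
    ∃ h : ℝ → ℝ, ContDiff ℝ 2 h ∧ EqOn h (fun r => g (clampedPotential N h r)) (Icc 0 1) := by
  have hcont (f : ℝ →ᵇ ℝ) :
      Continuous fun r : ℝ => clampedPotential N f (projIcc 0 1 zero_le_one r) :=
    (continuous_clampedPotential f.continuous).comp
      (continuous_subtype_val.comp continuous_projIcc)
  let T (f : ℝ →ᵇ ℝ) : ℝ →ᵇ ℝ := BoundedContinuousFunction.ofNormedAddCommGroup
    (fun r => g (clampedPotential N f (projIcc 0 1 zero_le_one r)))
    (hg.continuous.comp (hcont f)) C fun r => hbound _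
  have hT : ContractingWith K T := by
    refine ⟨hK, LipschitzWith.of_dist_le_mul fun f₁ f₂ => ?_⟩
    refine (BoundedContinuousFunction.dist_le (by positivity)).mpr fun r => ?_
    refine (hLip.dist_le_mul _ _).trans (mul_le_mul_of_nonneg_left ?_ K.coe_nonneg)
    rw [Real.dist_eq, ← clampedPotential_sub f₁.continuous f₂.continuous]
    exact abs_clampedPotential_le (fun s _ => f₁.dist_coe_le_dist s) _ (projIcc 0 1 _ r).2
  set f := hT.fixedPoint
  have hfix (r : ℝ) (hr : r ∈ Icc (0 : ℝ) 1) : f r = g (clampedPotential N f r) := by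
    conv_lhs => rw [← show T f = f from hT.fixedPoint_isFixedPt]
    change g (clampedPotential N f (projIcc 0 1 zero_le_one r)) = _
    rw [projIcc_of_mem _ hr]
  have hC2 : ContDiff ℝ 2 fun r => g (clampedPotential N f r) :=
    hg.comp (mod_cast contDiff_clampedPotential 0 (contDiff_zero.mpr f.continuous))
  refine ⟨_, hC2, fun r hr => ?_⟩
  exact congrArg g (clampedPotential_congr f.continuous hC2.continuous hfix hr)

theorem exists_lipschitz_eqOn_inv_sq : ∃ (g : ℝ → ℝ) (L : ℝ≥0), ContDiff ℝ 2 g ∧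
    LipschitzWith L g ∧ (∀ s, |g s| ≤ 4) ∧ ∀ s, |s| ≤ 1 / 4 → g s = ((1 - s) ^ 2)⁻¹ := by
  let β : ContDiffBump (0 : ℝ) := ⟨1 / 4, 1 / 2, by norm_num, by norm_num⟩
  have hβ : ContDiff ℝ 2 β := β.contDiff
  have hβ0 {s : ℝ} (hs : 1 / 2 ≤ |s|) : β s = 0 := β.zero_of_le_dist (by simpa [β] using hs)
  have hle (s : ℝ) : 1 / 2 ≤ 1 - s * β s := by
    rcases le_or_gt (1 / 2) |s| with hs | hs
    · rw [hβ0 hs]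
      norm_num
    · nlinarith [abs_le.mp hs.le, β.nonneg (x := s), β.le_one (x := s)]
  have hg : ContDiff ℝ 2 fun s => ((1 - s * β s) ^ 2)⁻¹ :=
    ContDiff.inv (by fun_prop) fun s => (pow_pos (by linarith [hle s]) 2).ne'
  obtain ⟨L, hL⟩ := ContDiff.lipschitzWith_of_hasCompactSupport
    (f := fun s => ((1 - s * β s) ^ 2)⁻¹ - 1)
    (.intro (isCompact_closedBall (0 : ℝ) (1 / 2)) fun s hs => by
      rw [mem_closedBall_zero_iff, not_le, Real.norm_eq_abs] at hs
      simp [hβ0 hs.le])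
    (hg.sub contDiff_const) two_ne_zero
  refine ⟨_, L, hg, LipschitzWith.of_dist_le_mul fun s t => ?_, fun s => ?_, fun s hs => ?_⟩
  · simpa only [Real.dist_eq, sub_sub_sub_cancel_right] using hL.dist_le_mul s t
  · rw [abs_of_nonneg (by positivity)]
    exact inv_le_of_inv_le₀ four_pos (by nlinarith [hle s])
  · rw [β.one_of_mem_closedBall (by simpa [β] using hs), mul_one]

theorem exists_clampedPotential_eqn (N : ℕ) : ∃ ε > 0, ∃ h : ℝ → ℝ, ContDiff ℝ 2 h ∧
    ∀ r ∈ Icc (0 : ℝ) 1, ε * clampedPotential N h r < 1 ∧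
      h r = ((1 - ε * clampedPotential N h r) ^ 2)⁻¹ := by
  obtain ⟨g, L, hg, hL, hbound, hg_eq⟩ := exists_lipschitz_eqOn_inv_sq
  set ε : ℝ≥0 := (16 * (L + 1))⁻¹ with hε_def
  have hε : 0 < ε := by positivity
  have hε_le : ε ≤ 16⁻¹ := inv_anti₀ (by norm_num) (le_mul_of_one_le_right' le_add_self)
  have hLε : L * ε < 1 := by
    rw [hε_def, ← div_eq_mul_inv, div_lt_one (by positivity)]
    exact (lt_add_one L).trans_le (le_mul_of_one_le_left' (by norm_num))
  obtain ⟨h, hh, hfix⟩ := exists_eqOn_comp_clampedPotential N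
    (hg.comp (contDiff_const.mul contDiff_id)) hLε
    (hL.comp (lipschitzWith_smul (ε : ℝ) |>.weaken (by simp))) fun s => hbound _
  refine ⟨ε, hε, h, hh, fun r hr => ?_⟩
  have hsmall : |ε * clampedPotential N h r| ≤ 1 / 4 := by
    have hS : |clampedPotential N h r| ≤ 4 := abs_clampedPotential_le (fun s hs => by
      rw [hfix hs]
      exact hbound _) r hr
    calc |ε * clampedPotential N h r| = ε * |clampedPotential N h r| := by
          rw [abs_mul, abs_of_pos hε]
      _ ≤ 16⁻¹ * 4 := mul_le_mul hε_le hS (abs_nonneg _) (by norm_num)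
      _ = 1 / 4 := by norm_num
  exact ⟨by linarith [le_of_abs_le hsmall], (hfix hr).trans (hg_eq _ hsmall)⟩

theorem norm_sq_mem_Ico {E : Type*} [SeminormedAddCommGroup E] {x : E}
    (hx : x ∈ ball (0 : E) 1) : ‖x‖ ^ 2 ∈ Ico (0 : ℝ) 1 :=
  ⟨sq_nonneg _, pow_lt_one₀ (norm_nonneg x) (mem_ball_zero_iff.mp hx) two_ne_zero⟩

theorem fderivWithin_comp_norm_sq_eq_zero {E : Type*} [NormedAddCommGroup E]
    [InnerProductSpace ℝ E] {F : ℝ → ℝ} (hF : HasDerivAt F 0 1) {x : E} (hx : ‖x‖ = 1)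
    (s : Set E) : fderivWithin ℝ (fun y => F (‖y‖ ^ 2)) s x = 0 := by
  have hcomp : HasFDerivAt (fun y : E => F (‖y‖ ^ 2)) (0 : E →L[ℝ] ℝ) x := by
    rw [← one_pow 2, ← hx] at hF
    simpa using! hF.comp_hasFDerivAt x ((hasStrictFDerivAt_norm_sq x).hasFDerivAt)
  simp only [fderivWithin, hcomp.hasFDerivWithinAt, if_true]

theorem solSet_nonempty {N : ℕ} (hN : N ≠ 0) : (solSet N).Nonempty := by
  obtain ⟨ε, hε, h, hh, hsol⟩ := exists_clampedPotential_eqn N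
  have hpos : ∀ r ∈ Icc (0 : ℝ) 1, 0 < h r := fun r hr => by
    rw [(hsol r hr).2]
    exact inv_pos.mpr (pow_pos (sub_pos.mpr (hsol r hr).1) 2)
  have hmem {x : 𝔼 N} (hx : x ∈ ball 0 1) : ‖x‖ ^ 2 ∈ Icc (0 : ℝ) 1 :=
    Ico_subset_Icc_self (norm_sq_mem_Ico hx)
  have hone : (1 : ℝ) ∈ Icc (0 : ℝ) 1 := right_mem_Icc.mpr zero_le_one
  refine ⟨ε, hε, fun x => ε * clampedPotential N h (‖x‖ ^ 2), ?_, fun x hx => ?_,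
    fun x hx => (hsol _ (hmem hx)).1, fun x hx => ?_, fun x hx => ?_, fun x hx => ?_⟩
  · have hC4 : ContDiff ℝ 4 (clampedPotential N h) := mod_cast contDiff_clampedPotential 2 hh
    exact (contDiff_const.mul (hC4.comp (contDiff_norm_sq ℝ))).contDiffOn
  · refine mul_pos hε ?_
    simpa only [clampedPotential_one] using strictAntiOn_clampedPotential (N := N) hh.continuous
      hpos (hmem hx) hone (norm_sq_mem_Ico hx).2
  · rw [biharm_clampedPotential hN (hh.of_le one_le_two), (hsol _ (hmem hx)).2, div_eq_mul_inv]
  · simp [hx, clampedPotential_one]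
  · have hderiv := (hasDerivAt_clampedPotential (N := N) hh.continuous 1).const_mul ε
    rw [sub_self, zero_div, mul_zero] at hderiv
    rw [fderivWithin_comp_norm_sq_eq_zero hderiv hx, zero_apply]

end Existence

section Symmetry

variable {N : ℕ} {lam : ℝ} {u v : 𝔼 N → ℝ} {e : 𝔼 N} {r : ℝ}

/-- The function `v` is radially symmetric on the open unit ball. -/
def IsRadialOnBall (v : 𝔼 N → ℝ) : Prop :=
  ∀ ⦃x y⦄, x ∈ ball 0 1 → ‖x‖ = ‖y‖ → v x = v y

/-- The restriction of `v` to the ray through `e`, in the variable `r = |x|²`. -/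
noncomputable def radialRestriction (e : 𝔼 N) (v : 𝔼 N → ℝ) (r : ℝ) : ℝ :=
  v (√r • e)

theorem linearIsometryEquiv_mem_ball (R : 𝔼 N ≃ₗᵢ[ℝ] 𝔼 N) {x : 𝔼 N} (hx : x ∈ ball 0 1) :
    R x ∈ ball (0 : 𝔼 N) 1 := by
  rwa [mem_ball_zero_iff, R.norm_map, ← mem_ball_zero_iff]

theorem IsClassicalSolution.hasFDerivWithinAt (hu : IsClassicalSolution N lam u) {x : 𝔼 N}
    (hx : ‖x‖ = 1) :
    HasFDerivWithinAt u (fderivWithin ℝ u (closedBall 0 1) x) (closedBall 0 1) x :=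
  (hu.contDiffOn.differentiableOn (by norm_num) x
    (mem_closedBall_zero_iff.mpr hx.le)).hasFDerivWithinAt

theorem IsClassicalSolution.comp_linearIsometryEquiv (hu : IsClassicalSolution N lam u)
    (R : 𝔼 N ≃ₗᵢ[ℝ] 𝔼 N) : IsClassicalSolution N lam (u ∘ R) where
  contDiffOn := hu.contDiffOn.comp R.contDiff.contDiffOn fun x hx => by simpa using hx
  pos x hx := hu.pos _ (linearIsometryEquiv_mem_ball R hx)
  lt_one x hx := hu.lt_one _ (linearIsometryEquiv_mem_ball R hx)
  eqn x hx := by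
    have hRx := linearIsometryEquiv_mem_ball R hx
    rw [biharm_comp_linearIsometryEquiv R (hu.contDiffAt hRx), hu.eqn _ hRx, Function.comp_apply]
  bdry x hx := hu.bdry _ ((R.norm_map x).trans hx)
  bdry_deriv x hx := by
    have hRx : ‖R x‖ = 1 := (R.norm_map x).trans hx
    have hcomp := (hu.hasFDerivWithinAt hRx).comp x
      (R.toContinuousLinearEquiv.hasFDerivAt.hasFDerivWithinAt (s := closedBall 0 1))
      fun y hy => by simpa using hy
    rw [hcomp.fderivWithin (uniqueDiffWithinAt_convex (convex_closedBall 0 1)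
      (by simp [interior_closedBall]) (subset_closure (mem_closedBall_zero_iff.mpr hx.le)))]
    exact hu.bdry_deriv _ hRx

/-- Compare `u` with its reflection exchanging two points of equal norm. -/
theorem IsClassicalSolution.isRadialOnBall_of_minimal (hu : IsClassicalSolution N lam u)
    (hmin : ∀ v, IsClassicalSolution N lam v → ∀ x ∈ ball (0 : 𝔼 N) 1, u x ≤ v x) :
    IsRadialOnBall u := by
  have hle {x y : 𝔼 N} (hx : x ∈ ball 0 1) (hxy : ‖x‖ = ‖y‖) : u x ≤ u y := by
    have hrefl := hmin _ (hu.comp_linearIsometryEquiv (ℝ ∙ (x - y))ᗮ.reflection) x hx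
    rwa [Function.comp_apply, Submodule.reflection_sub hxy] at hrefl
  intro x y hx hxy
  have hy : y ∈ ball 0 1 := by rwa [mem_ball_zero_iff, ← hxy, ← mem_ball_zero_iff]
  exact (hle hx hxy).antisymm (hle hy hxy.symm)

theorem IsRadialOnBall.lap (hv : IsRadialOnBall v)
    (hv2 : ∀ x ∈ ball (0 : 𝔼 N) 1, ContDiffAt ℝ 2 v x) : IsRadialOnBall (lap v) := by
  intro x y hx hxy
  have hrefl := Submodule.reflection_sub hxy
  have hy : y ∈ ball 0 1 := by rwa [mem_ball_zero_iff, ← hxy, ← mem_ball_zero_iff]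
  have hlap := lap_comp_linearIsometryEquiv (u := v) (x := x) (ℝ ∙ (x - y))ᗮ.reflection
    (by rw [hrefl]; exact hv2 y hy)
  rw [hrefl] at hlap
  refine Eq.trans (lap_eventuallyEq ?_).eq_of_nhds hlap
  filter_upwards [isOpen_ball.mem_nhds hx] with z hz
  exact hv hz (LinearIsometryEquiv.norm_map _ z).symm

theorem norm_sqrt_smul (he : ‖e‖ = 1) (r : ℝ) : ‖√r • e‖ = √r := by
  rw [norm_smul, he, mul_one, Real.norm_of_nonneg (Real.sqrt_nonneg r)]

theorem sqrt_smul_mem_ball (he : ‖e‖ = 1) (hr : r < 1) : √r • e ∈ ball (0 : 𝔼 N) 1 := by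
  rwa [mem_ball_zero_iff, norm_sqrt_smul he, Real.sqrt_lt' one_pos, one_pow]

theorem hasDerivAt_sqrt_smul (hr : 0 < r) (e : 𝔼 N) :
    HasDerivAt (fun r : ℝ => √r • e) ((1 / (2 * √r)) • e) r :=
  (Real.hasDerivAt_sqrt hr.ne').smul_const e

theorem IsRadialOnBall.radialRestriction_norm_sq (hv : IsRadialOnBall v) (he : ‖e‖ = 1) {x : 𝔼 N}
    (hx : x ∈ ball 0 1) : radialRestriction e v (‖x‖ ^ 2) = v x := by
  refine (hv hx ?_).symm
  rw [norm_sqrt_smul he, Real.sqrt_sq (norm_nonneg x)]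

theorem contDiffAt_radialRestriction {n : WithTop ℕ∞} (hr : 0 < r)
    (hv : ContDiffAt ℝ n v (√r • e)) : ContDiffAt ℝ n (radialRestriction e v) r :=
  hv.comp r ((Real.contDiffAt_sqrt hr.ne').smul contDiffAt_const)

theorem deriv_radialRestriction (hr : 0 < r) (hv : DifferentiableAt ℝ v (√r • e)) :
    deriv (radialRestriction e v) r = fderiv ℝ v (√r • e) e * (1 / (2 * √r)) := by
  refine (hv.hasFDerivAt.comp_hasDerivAt r (hasDerivAt_sqrt_smul hr e)).deriv.trans ?_
  rw [map_smul, smul_eq_mul, mul_comm]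

theorem tendsto_sqrt_smul (e : 𝔼 N) :
    Tendsto (fun r : ℝ => √r • e) (nhdsWithin 0 (Ioi 0)) (nhds 0) := by
  have hcont : Continuous fun r : ℝ => √r • e := by fun_prop
  simpa using (hcont.tendsto 0).mono_left nhdsWithin_le_nhds

theorem tendsto_radialRestriction (hv : ContinuousAt v 0) (e : 𝔼 N) :
    Tendsto (radialRestriction e v) (nhdsWithin 0 (Ioi 0)) (nhds (v 0)) :=
  hv.tendsto.comp (tendsto_sqrt_smul e)

theorem isBigORpow_deriv_radialRestriction (hv : ContDiffAt ℝ 1 v 0) (e : 𝔼 N) :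
    IsBigORpow (-1 / 2) (deriv (radialRestriction e v)) := by
  have hfderiv : ContinuousAt (fun x => fderiv ℝ v x e) 0 :=
    (ContDiffAt.clm_apply (hv.fderiv_right (m := 0) le_rfl) contDiffAt_const).continuousAt
  have hsqrt : IsBigORpow (-1 / 2) fun r => 1 / (2 * √r) := by
    refine ((IsBigORpow.rpow (-1 / 2)).const_mul (1 / 2)).congr' ?_ .rfl
    filter_upwards [self_mem_nhdsWithin] with r (hr : 0 < r)
    rw [neg_div, Real.rpow_neg hr.le, ← Real.sqrt_eq_rpow]
    ring
  have hprod := (IsBigORpow.of_tendsto (tendsto_radialRestriction hfderiv e)).mul hsqrt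
  rw [zero_add] at hprod
  refine hprod.congr' ?_ .rfl
  have hdiff : ∀ᶠ r : ℝ in nhdsWithin 0 (Ioi 0), DifferentiableAt ℝ v (√r • e) :=
    (tendsto_sqrt_smul e).eventually ((hv.eventually (by simp)).mono
      fun x hx => hx.differentiableAt one_ne_zero)
  filter_upwards [self_mem_nhdsWithin, hdiff] with r hr hvr
  exact (deriv_radialRestriction hr hvr).symm

theorem IsRadialOnBall.hasRadialLaplacian (hv : IsRadialOnBall v)
    (hv2 : ∀ x ∈ ball (0 : 𝔼 N) 1, ContDiffAt ℝ 2 v x) (he : ‖e‖ = 1) :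
    HasRadialLaplacian N (radialRestriction e v) (deriv (radialRestriction e v))
      (radialRestriction e (_root_.lap v)) := by
  have hC2 (r : ℝ) (hr : r ∈ Ioo (0 : ℝ) 1) : ContDiffAt ℝ 2 (radialRestriction e v) r :=
    contDiffAt_radialRestriction hr.1 (hv2 _ (sqrt_smul_mem_ball he hr.2))
  have hderiv (r : ℝ) (hr : r ∈ Ioo (0 : ℝ) 1) :
      HasDerivAt (radialRestriction e v) (deriv (radialRestriction e v) r) r :=
    ((hC2 r hr).differentiableAt two_ne_zero).hasDerivAt
  refine ⟨hderiv, fun r hr => ?_⟩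
  have hderiv2 : HasDerivAt (deriv (radialRestriction e v))
      (deriv (deriv (radialRestriction e v)) r) r :=
    (ContDiffAt.differentiableAt (n := 1) (((hC2 r hr).fderiv_right (by norm_num)).clm_apply
      contDiffAt_const) one_ne_zero).hasDerivAt
  have hnorm : ‖√r • e‖ ^ 2 = r := by rw [norm_sqrt_smul he, Real.sq_sqrt hr.1.le]
  have hlap := lap_comp_norm_sq (x := √r • e) (F := radialRestriction e v)
    (by rw [hnorm]; exact eventually_of_mem (Ioo_mem_nhds hr.1 hr.2) hderiv)
    (hnorm.symm ▸ hderiv2)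
  have hv_eq : (fun y => radialRestriction e v (‖y‖ ^ 2)) =ᶠ[nhds (√r • e)] v := by
    filter_upwards [isOpen_ball.mem_nhds (sqrt_smul_mem_ball he hr.2)] with z hz
    exact hv.radialRestriction_norm_sq he hz
  rw [(lap_eventuallyEq hv_eq).eq_of_nhds, hnorm] at hlap
  refine hderiv2.congr_deriv ?_
  rw [radialRestriction, hlap, add_sub_cancel_right]
  exact (mul_div_cancel_left₀ _ (mul_pos four_pos hr.1).ne').symm

theorem IsRadialOnBall.hasRadialBilaplacian (hv : IsRadialOnBall v)
    (hv4 : ∀ x ∈ ball (0 : 𝔼 N) 1, ContDiffAt ℝ 4 v x) (he : ‖e‖ = 1) :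
    HasRadialBilaplacian N 0 (radialRestriction e v) (deriv (radialRestriction e v))
      (radialRestriction e (_root_.lap v)) (deriv (radialRestriction e (_root_.lap v)))
      (radialRestriction e (biharm v)) := by
  have hv2 (x : 𝔼 N) (hx : x ∈ ball 0 1) : ContDiffAt ℝ 2 v x := (hv4 x hx).of_le (by norm_num)
  have hlap2 (x : 𝔼 N) (hx : x ∈ ball 0 1) : ContDiffAt ℝ 2 (_root_.lap v) x :=
    contDiffAt_lap (hv4 x hx) (by norm_num)
  have hzero : (0 : 𝔼 N) ∈ ball 0 1 := mem_ball_self one_pos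
  refine ⟨hv.hasRadialLaplacian hv2 he, (hv.lap hv2).hasRadialLaplacian hlap2 he,
    .of_tendsto (tendsto_radialRestriction (hv4 0 hzero).continuousAt e),
    (isBigORpow_deriv_radialRestriction ((hv2 0 hzero).of_le one_le_two) e).mono (by norm_num),
    (IsBigORpow.of_tendsto (tendsto_radialRestriction (hlap2 0 hzero).continuousAt e)).mono
      (by norm_num),
    (isBigORpow_deriv_radialRestriction ((hlap2 0 hzero).of_le one_le_two) e).mono (by norm_num)⟩

theorem IsClassicalSolution.hasDerivWithinAt_radialRestriction_one
    (hu : IsClassicalSolution N lam u) (he : ‖e‖ = 1) :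
    HasDerivWithinAt (radialRestriction e u) 0 (Iic 1) 1 := by
  have hone : ‖√(1 : ℝ) • e‖ = 1 := by rw [norm_sqrt_smul he, Real.sqrt_one]
  have hmaps : MapsTo (fun r : ℝ => √r • e) (Iic 1) (closedBall 0 1) := fun r hr => by
    rw [mem_closedBall_zero_iff, norm_sqrt_smul he]
    exact Real.sqrt_le_one.mpr hr
  have hcomp := (hu.hasFDerivWithinAt hone).comp_hasDerivWithinAt 1
    (hasDerivAt_sqrt_smul one_pos e).hasDerivWithinAt hmaps
  refine hcomp.congr_deriv ?_
  rw [map_smul, Real.sqrt_one, one_smul, hu.bdry_deriv e he, smul_zero]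

theorem IsClassicalSolution.isRadialProfile (hu : IsClassicalSolution N lam u)
    (hrad : IsRadialOnBall u) (he : ‖e‖ = 1) :
    IsRadialProfile N lam (fun r => 1 - radialRestriction e u r)
      (fun r => -deriv (radialRestriction e u) r) (fun r => -radialRestriction e (lap u) r)
      (fun r => -deriv (radialRestriction e (lap u)) r) := by
  have hzero : (0 : 𝔼 N) ∈ ball 0 1 := mem_ball_self one_pos
  have hbi := (HasRadialBilaplacian.const N 1 le_rfl).add
    ((hrad.hasRadialBilaplacian (fun x hx => hu.contDiffAt hx) he).const_mul (-1))
  simp only [neg_one_mul, zero_add] at hbi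
  simp only [← sub_eq_add_neg] at hbi
  refine ⟨⟨hbi.1, ⟨hbi.2.1, fun r hr => ?_⟩, hbi.3, hbi.4, hbi.5, hbi.6⟩, fun r hr => ?_,
    ⟨1 - u 0, sub_pos.mpr (hu.lt_one 0 hzero), ?_⟩, ?_, ?_⟩
  · have heqn : radialRestriction e (biharm u) r = lam / (1 - radialRestriction e u r) ^ 2 :=
      hu.eqn _ (sqrt_smul_mem_ball he hr.2)
    exact heqn ▸ hbi.2.2 r hr
  · exact sub_pos.mpr (hu.lt_one _ (sqrt_smul_mem_ball he hr.2))
  · exact (tendsto_radialRestriction (hu.contDiffAt hzero).continuousAt e).const_sub 1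
  · simp [radialRestriction, hu.bdry e he]
  · simpa using (hu.hasDerivWithinAt_radialRestriction_one he).const_sub 1

theorem IsClassicalSolution.le_one_sub_norm_rpow (hu : IsClassicalSolution N lam u)
    (hrad : IsRadialOnBall u) (hN : 9 ≤ N) {x : 𝔼 N} (hx : x ∈ ball 0 1) :
    u x ≤ 1 - ‖x‖ ^ (4 / 3 : ℝ) := by
  obtain ⟨e, he⟩ : ∃ e : 𝔼 N, ‖e‖ = 1 := ⟨EuclideanSpace.single ⟨0, by lia⟩ 1, by simp⟩
  rcases eq_or_ne x 0 with rfl | hx0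
  · rw [norm_zero, Real.zero_rpow (by norm_num), sub_zero]
    exact (hu.lt_one 0 hx).le
  have hbound := (hu.isRadialProfile hrad he).rpow_two_thirds_le hN (‖x‖ ^ 2)
    ⟨by positivity, (norm_sq_mem_Ico hx).2⟩
  rw [hrad.radialRestriction_norm_sq he hx, ← Real.rpow_natCast_mul (norm_nonneg x)] at hbound
  norm_num at hbound
  linarith

end Symmetry

/-- for N ≥ 9 the extremal solution satisfies u*(x) ≤ 1 - |x|^{4/3} on B. -/
theorem extremal_upper_bound_dim_ge_nine (N : ℕ) (hN : 9 ≤ N)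
    (uMin : ℝ → EuclideanSpace ℝ (Fin N) → ℝ)
    (hMin : ∀ lam : ℝ, 0 < lam → lam < sSup (solSet N) →
      IsClassicalSolution N lam (uMin lam) ∧
        ∀ v, IsClassicalSolution N lam v →
          ∀ x ∈ ball (0 : EuclideanSpace ℝ (Fin N)) 1, uMin lam x ≤ v x)
    (hMono : ∀ x ∈ ball (0 : EuclideanSpace ℝ (Fin N)) 1, ∀ l₁ l₂ : ℝ,
      0 < l₁ → l₁ ≤ l₂ → l₂ < sSup (solSet N) → uMin l₁ x ≤ uMin l₂ x)
    (uStar : EuclideanSpace ℝ (Fin N) → ℝ)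
    (hStar : ∀ x ∈ ball (0 : EuclideanSpace ℝ (Fin N)) 1,
      Tendsto (fun lam => uMin lam x) (nhdsWithin (sSup (solSet N)) (Iio (sSup (solSet N))))
        (nhds (uStar x)))
    :
    ∀ x ∈ ball (0 : EuclideanSpace ℝ (Fin N)) 1, uStar x ≤ 1 - ‖x‖ ^ ((4 : ℝ) / 3) := by
  obtain ⟨l, hl⟩ := solSet_nonempty (N := N) (by lia)
  have hpos : 0 < sSup (solSet N) := hl.1.trans_le (le_csSup (bddAbove_solSet N) hl)
  intro x hx
  refine le_of_tendsto (hStar x hx) ?_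
  filter_upwards [Ioo_mem_nhdsLT hpos] with lam hlam
  obtain ⟨hsol, hmin⟩ := hMin lam hlam.1 hlam.2
  exact hsol.le_one_sub_norm_rpow (hsol.isRadialOnBall_of_minimal hmin) hN hx
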